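/- Let n ≥ 1, 1 < p < ∞, 1 ≤ q ≤ ∞, 0 ≤ α < n(p-1), let M ∈ ℕ and let s be a real number with s < M, and suppose that either s > (n+α)/p, or s = (n+α)/p and q = 1. Then the weighted Besov space B^s_{p,q}(ℝ^n, |·|^α) (defined via the ball-means-of-differences norm of order M) is an algebra under pointwise multiplication: there exists a constant C > 0 such that for all f, g ∈ B^s_{p,q}(ℝ^n, |·|^α), the product f·g belongs to B^s_{p,q}(ℝ^n, |·|^α) and ‖f·g‖* ≤ C ‖f‖* ‖g‖*. -/

import Mathlib

/-!
The proof approximates functions at scale `t` by a smoothing operator.  From the `M`-th difference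
one builds (`exists_kernel`) a smooth compactly supported kernel `K` for which
`S_t f (x) = ∫ K h * f (x + t h) dh` satisfies `|f - S_t f| ≤ C * d_t^M f` pointwise.  The
condition `0 ≤ α < n (p - 1)` enters only through averages over balls: they are bounded on the
weighted space uniformly in the scale (`wLpE_ballAvg_le`), and the average at scale `t` is
everywhere at most `C t ^ (-(n + α) / p)` times the weighted norm (`ballAvg_le_wLpE`).

Write `P_t = S_t ∘ S_t` (`approxOp`) and `D f t = ‖d_t^M f‖` (`modD`), the norm being that of
`L^p(|x|^α)`.  Since `P_a f - P_b f = S_a w + S_b w` with `w = S_a f - S_b f` (`smoothOp_comm`), the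
weighted norm of `w` is controlled by `D f a + D f b`.

Essential boundedness: telescoping `P` over the scales `2 ^ (-j) t` bounds `|f|` almost everywhere
by `C (‖f‖ + ∑ (2 ^ (-j) t) ^ (-(n + α) / p) * D f (2 ^ (-j) t))`, and averaging over
`1 / 2 < t < 1` together with Hölder's inequality in the scale gives `‖f‖_∞ ≤ C ‖f‖*`
(`ae_enorm_le_besovNorm`).

Products: telescoping `P f * P g` over the scales `2 ^ j t < 1` writes `f g` as a sum of terms
`(P_a f - P_{2a} f) * P_c g`, the same terms with `f` and `g` exchanged, and two boundary
contributions.  The smoothness of the kernel gives a factor `(t / a) ^ M` for the `M`-th difference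
with step `t` of such a term (`modD_smoothOp_mul_le`), so that
`D (f g) t ≤ C ‖g‖_∞ * (∑_j 2 ^ (-j M) * D f (2 ^ j t) + t ^ M * ‖f‖)` plus the same expression
with `f` and `g` exchanged (`modD_mul_le`).  Because `s < M`, Minkowski's inequality and dilation
invariance of `dt / t` turn this into `‖f g‖* ≤ C (‖f‖* ‖g‖_∞ + ‖f‖_∞ ‖g‖*)`
(`besB_modD_mul_le`), and the theorem follows.
-/

open MeasureTheory ENNReal Filter

noncomputable section

/-- Weighted `L^p` "norm" with power weight `|x|^α`, for `ℝ≥0∞`-valued functions. -/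
noncomputable def wLpE (n : ℕ) (p α : ℝ) (F : EuclideanSpace ℝ (Fin n) → ℝ≥0∞) : ℝ≥0∞ :=
  (∫⁻ x, F x ^ p * (‖x‖₊ : ℝ≥0∞) ^ α) ^ (1 / p)

/-- Weighted `L^p` norm `(∫ |f(x)|^p |x|^α dx)^(1/p)`. -/
noncomputable def wLp (n : ℕ) (p α : ℝ) (f : EuclideanSpace ℝ (Fin n) → ℝ) : ℝ≥0∞ :=
  wLpE n p α (fun x => (‖f x‖₊ : ℝ≥0∞))

/-- Iterated difference `Δ_h^M f (x) = ∑_{i=0}^M (-1)^(M-i) C(M,i) f (x + i h)`. -/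
def iterDiff (n M : ℕ) (f : EuclideanSpace ℝ (Fin n) → ℝ) (h x : EuclideanSpace ℝ (Fin n)) : ℝ :=
  ∑ i ∈ Finset.range (M + 1), (-1 : ℝ) ^ (M - i) * (M.choose i : ℝ) * f (x + (i : ℝ) • h)

/-- Ball means of differences `d_t^M f (x) = ∫_{|h| ≤ 1} |Δ_{t h}^M f (x)| dh`. -/
noncomputable def ballMeans (n M : ℕ) (f : EuclideanSpace ℝ (Fin n) → ℝ) (t : ℝ)
    (x : EuclideanSpace ℝ (Fin n)) : ℝ≥0∞ :=
  ∫⁻ h in {h : EuclideanSpace ℝ (Fin n) | ‖h‖ ≤ 1}, (‖iterDiff n M f (t • h) x‖₊ : ℝ≥0∞)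

/-- The weighted Besov norm defined via ball means of differences of order `M`. -/
noncomputable def besovNorm (n : ℕ) (p α s : ℝ) (q : ℝ≥0∞) (M : ℕ)
    (f : EuclideanSpace ℝ (Fin n) → ℝ) : ℝ≥0∞ :=
  wLp n p α f +
    if q = ∞ then
      ⨆ t ∈ Set.Ioo (0 : ℝ) 1, ENNReal.ofReal (t ^ (-s)) * wLpE n p α (ballMeans n M f t)
    else
      (∫⁻ t in Set.Ioo (0 : ℝ) 1,
          ENNReal.ofReal (t ^ (-(s * q.toReal))) * wLpE n p α (ballMeans n M f t) ^ q.toReal *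
            ENNReal.ofReal t⁻¹) ^ (1 / q.toReal)

/-- Membership in the weighted Besov space `B^s_{p,q}(ℝ^n, |·|^α)`. -/
def MemBesov (n : ℕ) (p α s : ℝ) (q : ℝ≥0∞) (M : ℕ)
    (f : EuclideanSpace ℝ (Fin n) → ℝ) : Prop :=
  Measurable f ∧ besovNorm n p α s q M f < ∞

/-! ### Power weights and ball averages -/

/-- Euclidean space `ℝ^n`. -/
abbrev Sp (n : ℕ) := EuclideanSpace ℝ (Fin n)

/-- Unnormalised average of `G` over the ball of radius `R * r` around `x`, rescaled to the fixed
ball of radius `R`. -/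
def ballAvg (n : ℕ) (R r : ℝ) (G : Sp n → ℝ≥0∞) (x : Sp n) : ℝ≥0∞ :=
  ∫⁻ h in Metric.closedBall (0 : Sp n) R, G (x + r • h)

lemma nontrivial_sp {n : ℕ} (hn : 1 ≤ n) : Nontrivial (Sp n) := by
  have : Nonempty (Fin n) := ⟨⟨0, hn⟩⟩
  infer_instance

lemma singular_lintegral_lt_top {n : ℕ} (hn : 1 ≤ n) {β : ℝ} (hβ : β < n) :
    ∫⁻ y in Metric.ball (0 : Sp n) 1, ‖y‖ₑ ^ (-β) < ∞ := by
  have := nontrivial_sp hn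
  have h1 : IntegrableOn (fun x : Sp n => ‖x‖ ^ (-β)) (Metric.ball (0 : Sp n) 1) volume := by
    rw [integrableOn_fun_norm_addHaar volume (f := fun r : ℝ => r ^ (-β))]
    have h2 : IntegrableOn (fun y : ℝ => y ^ ((n : ℝ) - 1 - β)) (Set.Ioo 0 1) volume := by
      rw [intervalIntegral.integrableOn_Ioo_rpow_iff one_pos]
      linarith
    refine h2.congr_fun ?_ measurableSet_Ioo
    intro y hy
    simp only [finrank_euclideanSpace, Fintype.card_fin, smul_eq_mul]
    rw [← Real.rpow_natCast, ← Real.rpow_add hy.1, Nat.cast_sub hn]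
    congr 1
    push_cast
    ring
  refine lt_of_eq_of_lt ?_ h1.2
  refine lintegral_congr_ae ?_
  have h0 : ∀ᵐ y : Sp n ∂(volume.restrict (Metric.ball (0 : Sp n) 1)), y ≠ 0 := by
    refine ae_restrict_of_ae ?_
    simp [ae_iff]
  filter_upwards [h0] with y hy
  have : 0 < ‖y‖ := norm_pos_iff.2 hy
  rw [← ofReal_norm y, ENNReal.ofReal_rpow_of_pos this, Real.enorm_eq_ofReal (by positivity)]

lemma weight_integral_le {n : ℕ} (hn : 1 ≤ n) {β : ℝ} (hβ0 : 0 ≤ β) (hβ : β < n) (R : ℝ) :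
    ∃ C : ℝ≥0∞, C ≠ ∞ ∧ ∀ z : Sp n,
      ∫⁻ h in Metric.closedBall (0 : Sp n) R, ‖z + h‖ₑ ^ (-β) ≤ C := by
  refine ⟨(∫⁻ y in Metric.ball (0 : Sp n) 1, ‖y‖ₑ ^ (-β)) +
    volume (Metric.closedBall (0 : Sp n) R),
    ENNReal.add_ne_top.2 ⟨(singular_lintegral_lt_top hn hβ).ne, measure_closedBall_lt_top.ne⟩, ?_⟩
  intro z
  set F : Sp n → ℝ≥0∞ := (Metric.ball (0 : Sp n) 1).indicator (fun y => ‖y‖ₑ ^ (-β)) with hF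
  have hle : ∀ y : Sp n, ‖y‖ₑ ^ (-β) ≤ F y + 1 := by
    intro y
    by_cases hy : y ∈ Metric.ball (0 : Sp n) 1
    · simp [hF, hy]
    · have : (1 : ℝ≥0∞) ≤ ‖y‖ₑ := by
        rw [← ofReal_norm y, ENNReal.one_le_ofReal]
        simpa using hy
      have h2 : ‖y‖ₑ ^ (-β) ≤ 1 := by
        rw [ENNReal.rpow_neg, ENNReal.inv_le_one]
        simpa using ENNReal.rpow_le_rpow this hβ0
      exact h2.trans le_add_self
  calc ∫⁻ h in Metric.closedBall (0 : Sp n) R, ‖z + h‖ₑ ^ (-β)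
      ≤ ∫⁻ h in Metric.closedBall (0 : Sp n) R, (F (z + h) + 1) :=
        lintegral_mono fun h => hle (z + h)
    _ = (∫⁻ h in Metric.closedBall (0 : Sp n) R, F (z + h)) +
          volume (Metric.closedBall (0 : Sp n) R) := by
        rw [lintegral_add_right _ measurable_const]; simp
    _ ≤ (∫⁻ h, F (z + h)) + volume (Metric.closedBall (0 : Sp n) R) := by
        gcongr
        exact Measure.restrict_le_self
    _ = _ := by
        rw [lintegral_add_left_eq_self F z, hF, lintegral_indicator measurableSet_ball]

lemma weight_integral_scaled_le {n : ℕ} (hn : 1 ≤ n) {β : ℝ} (hβ0 : 0 ≤ β) (hβ : β < n) (R : ℝ) :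
    ∃ C : ℝ≥0∞, C ≠ ∞ ∧ ∀ (r : ℝ) (_ : 0 < r) (x : Sp n),
      ∫⁻ h in Metric.closedBall (0 : Sp n) R, ‖x + r • h‖ₑ ^ (-β) ≤
        C * ENNReal.ofReal r ^ (-β) := by
  obtain ⟨C, hC, h⟩ := weight_integral_le hn hβ0 hβ R
  refine ⟨C, hC, fun r hr x => ?_⟩
  have key : ∀ h : Sp n, ‖x + r • h‖ₑ ^ (-β) =
      ‖r⁻¹ • x + h‖ₑ ^ (-β) * ENNReal.ofReal r ^ (-β) := by
    intro h
    have : x + r • h = r • (r⁻¹ • x + h) := by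
      rw [smul_add, smul_smul, mul_inv_cancel₀ hr.ne', one_smul]
    rw [this, enorm_smul, Real.enorm_eq_ofReal hr.le, mul_comm,
      ENNReal.mul_rpow_of_ne_top enorm_ne_top ENNReal.ofReal_ne_top]
  simp_rw [key]
  rw [lintegral_mul_const _ (by fun_prop)]
  gcongr
  exact h _

lemma ballAvg_mono {n : ℕ} {R r : ℝ} {F G : Sp n → ℝ≥0∞} (h : ∀ x, F x ≤ G x) (x : Sp n) :
    ballAvg n R r F x ≤ ballAvg n R r G x :=
  lintegral_mono fun _ => h _

lemma measurable_ballAvg {n : ℕ} (R r : ℝ) {G : Sp n → ℝ≥0∞} (hG : Measurable G) :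
    Measurable (ballAvg n R r G) := by
  unfold ballAvg
  refine Measurable.lintegral_prod_right' (f := fun z : Sp n × Sp n => G (z.1 + r • z.2)) ?_
  fun_prop

/-- Hölder's inequality for a ball average, splitting the weight `|y|^α` off the integrand. -/
lemma ballAvg_le_holder {n : ℕ} {p α : ℝ} (hp : 1 < p)
    {G : Sp n → ℝ≥0∞} (hG : Measurable G) (R r : ℝ) (x : Sp n) (hx : r ≠ 0 ∧ 1 ≤ n ∨ x ≠ 0) :
    ballAvg n R r G x ≤
      (∫⁻ h in Metric.closedBall (0 : Sp n) R, G (x + r • h) ^ p * ‖x + r • h‖ₑ ^ α) ^ (1 / p) *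
      (∫⁻ h in Metric.closedBall (0 : Sp n) R, ‖x + r • h‖ₑ ^ (-(α / (p - 1)))) ^
        ((p - 1) / p) := by
  have hp0 : 0 < p := by linarith
  have hp1 : 0 < p - 1 := by linarith
  have hae : ∀ᵐ h : Sp n, x + r • h ≠ 0 := by
    by_cases hr : r = 0
    · have : x ≠ 0 := by tauto
      simp [hr, this]
    · by_cases hn : 1 ≤ n
      · have := nontrivial_sp hn
        have hsub : {h : Sp n | ¬ (x + r • h ≠ 0)} ⊆ {-(r⁻¹ • x)} := by
          intro h hh
          simp only [ne_eq, not_not, Set.mem_ofPred_eq] at hh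
          have h1 : r • h = -x := (neg_eq_of_add_eq_zero_right hh).symm
          have h2 : h = r⁻¹ • (r • h) := by rw [smul_smul, inv_mul_cancel₀ hr, one_smul]
          rw [Set.mem_singleton_iff, h2, h1, smul_neg]
        rw [ae_iff]
        exact measure_mono_null hsub (by simp)
      · have hn0 : n = 0 := by omega
        subst hn0
        have : x ≠ 0 := by tauto
        exact absurd (Subsingleton.elim x 0) this
  have hconj := Real.HolderConjugate.conjExponent hp
  have H := ENNReal.lintegral_mul_le_Lp_mul_Lq
    (volume.restrict (Metric.closedBall (0 : Sp n) R)) hconj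
    (f := fun h => G (x + r • h) * ‖x + r • h‖ₑ ^ (α / p)) (g := fun h => ‖x + r • h‖ₑ ^ (-(α / p)))
    (by fun_prop) (by fun_prop)
  have e1 : ballAvg n R r G x ≤ ∫⁻ a in Metric.closedBall (0 : Sp n) R,
      ((fun h => G (x + r • h) * ‖x + r • h‖ₑ ^ (α / p)) *
        (fun h => ‖x + r • h‖ₑ ^ (-(α / p)))) a := by
    refine lintegral_mono_ae (ae_restrict_of_ae ?_)
    filter_upwards [hae] with h hh
    simp only [Pi.mul_apply]
    rw [mul_assoc, ← ENNReal.rpow_add _ _ (by simpa using hh) enorm_ne_top]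
    simp
  refine e1.trans (H.trans (le_of_eq ?_))
  congr 1
  · congr 1
    refine lintegral_congr fun h => ?_
    rw [ENNReal.mul_rpow_of_nonneg _ _ hp0.le, ← ENNReal.rpow_mul]
    congr 2
    field_simp
  · congr 1
    · refine lintegral_congr fun h => ?_
      rw [← ENNReal.rpow_mul]
      congr 1
      rw [Real.conjExponent]
      field_simp
    · rw [Real.conjExponent]
      field_simp

/-- The average at scale `r` of a function in `L^p(|x|^α)` is everywhere bounded, by
`r ^ (-(n + α) / p)` times the norm. -/
lemma ballAvg_le_wLpE {n : ℕ} (hn : 1 ≤ n) {p α : ℝ} (hp : 1 < p) (hα0 : 0 ≤ α)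
    (hα : α < n * (p - 1)) (R : ℝ) :
    ∃ C : ℝ≥0∞, C ≠ ∞ ∧ ∀ (r : ℝ) (_ : 0 < r) (G : Sp n → ℝ≥0∞) (_ : Measurable G) (x : Sp n),
      ballAvg n R r G x ≤ C * ENNReal.ofReal (r ^ (-((n + α) / p))) * wLpE n p α G := by
  have hp0 : 0 < p := by linarith
  have hp1 : 0 < p - 1 := by linarith
  obtain ⟨C, hC, hW⟩ := weight_integral_scaled_le hn (β := α / (p - 1)) (by positivity)
    (by rw [div_lt_iff₀ hp1]; exact hα) R
  refine ⟨C ^ ((p - 1) / p), ENNReal.rpow_ne_top_of_nonneg (by positivity) hC, ?_⟩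
  intro r hr G hG x
  refine (ballAvg_le_holder (α := α) hp hG R r x (Or.inl ⟨hr.ne', hn⟩)).trans ?_
  have hmeas : Measurable (fun y : Sp n => G y ^ p * ‖y‖ₑ ^ α) := by fun_prop
  have h1 : ∫⁻ h in Metric.closedBall (0 : Sp n) R, G (x + r • h) ^ p * ‖x + r • h‖ₑ ^ α ≤
      ENNReal.ofReal (r ^ (-(n : ℝ))) * ∫⁻ y, G y ^ p * ‖y‖ₑ ^ α := by
    calc _ ≤ ∫⁻ h, G (x + r • h) ^ p * ‖x + r • h‖ₑ ^ α :=
          lintegral_mono' Measure.restrict_le_self le_rfl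
      _ = ∫⁻ h, (fun y => G (x + y) ^ p * ‖x + y‖ₑ ^ α) h ∂(Measure.map (r • ·) volume) := by
          rw [lintegral_map (by fun_prop) (by fun_prop)]
      _ = ENNReal.ofReal (r ^ (-(n : ℝ))) * ∫⁻ y, G (x + y) ^ p * ‖x + y‖ₑ ^ α := by
          rw [Measure.map_addHaar_smul volume hr.ne', lintegral_smul_measure]
          simp only [finrank_euclideanSpace, Fintype.card_fin, smul_eq_mul]
          rw [abs_of_pos (by positivity), Real.rpow_neg hr.le, Real.rpow_natCast]
      _ = _ := by
          rw [lintegral_add_left_eq_self (fun y : Sp n => G y ^ p * ‖y‖ₑ ^ α) x]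
  calc _ ≤ (ENNReal.ofReal (r ^ (-(n : ℝ))) * ∫⁻ y, G y ^ p * ‖y‖ₑ ^ α) ^ (1 / p) *
        (C * ENNReal.ofReal r ^ (-(α / (p - 1)))) ^ ((p - 1) / p) := by
        gcongr
        exact hW r hr x
    _ = _ := by
        rw [ENNReal.mul_rpow_of_nonneg _ _ (by positivity),
          ENNReal.mul_rpow_of_nonneg _ _ (by positivity), ← ENNReal.rpow_mul,
          ENNReal.ofReal_rpow_of_pos (by positivity), ENNReal.ofReal_rpow_of_pos hr,
          ← Real.rpow_mul hr.le]
        have e : r ^ (-((n + α) / p)) =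
            r ^ (-(n : ℝ) * (1 / p)) * r ^ (-(α / (p - 1)) * ((p - 1) / p)) := by
          rw [← Real.rpow_add hr]
          congr 1
          field_simp
          ring
        rw [e, ENNReal.ofReal_mul (by positivity)]
        change _ = _ * (∫⁻ y, G y ^ p * ‖y‖ₑ ^ α) ^ (1 / p)
        ring

/-- The Muckenhoupt-type bound behind the weighted boundedness of averages: for `α ≥ 0` it
suffices to compare the weight at the centre with the dual weight on the ball. -/
lemma weight_dual_le {n : ℕ} (hn : 1 ≤ n) {p α : ℝ} (hp : 1 < p) (hα0 : 0 ≤ α)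
    (hα : α < n * (p - 1)) {R : ℝ} (hR : 0 < R) :
    ∃ C : ℝ≥0∞, C ≠ ∞ ∧ ∀ (r : ℝ) (_ : 0 ≤ r) (x : Sp n) (_ : x ≠ 0),
      (∫⁻ h in Metric.closedBall (0 : Sp n) R, ‖x + r • h‖ₑ ^ (-(α / (p - 1)))) ^ (p - 1) *
        ‖x‖ₑ ^ α ≤ C := by
  have hp1 : 0 < p - 1 := by linarith
  set β := α / (p - 1) with hβ
  have hβ0 : 0 ≤ β := by positivity
  obtain ⟨C, hC, hW⟩ := weight_integral_scaled_le hn (β := β) (by positivity)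
    (by rw [div_lt_iff₀ hp1]; exact hα) R
  set V := volume (Metric.closedBall (0 : Sp n) R)
  have hV : V ≠ ∞ := measure_closedBall_lt_top.ne
  set K : ℝ≥0∞ := ENNReal.ofReal (2 * R) + 2
  have hK : K ≠ ∞ := ENNReal.add_ne_top.2 ⟨ENNReal.ofReal_ne_top, by simp⟩
  have aux : ∀ (J D ρ X : ℝ≥0∞), ρ ≠ 0 → ρ ≠ ∞ → J ≤ D * ρ ^ (-β) → X ≤ K * ρ →
      J ^ (p - 1) * X ^ α ≤ D ^ (p - 1) * K ^ α := by
    intro J D ρ X h0 h1 hJ hX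
    calc J ^ (p - 1) * X ^ α ≤ (D * ρ ^ (-β)) ^ (p - 1) * (K * ρ) ^ α := by gcongr
      _ = D ^ (p - 1) * K ^ α * (ρ ^ (-α) * ρ ^ α) := by
          rw [ENNReal.mul_rpow_of_nonneg _ _ hp1.le, ENNReal.mul_rpow_of_nonneg _ _ hα0,
            ← ENNReal.rpow_mul]
          have : -β * (p - 1) = -α := by rw [hβ]; field_simp
          rw [this]
          ring
      _ = D ^ (p - 1) * K ^ α := by
          rw [← ENNReal.rpow_add _ _ h0 h1]; simp
  refine ⟨(C + V) ^ (p - 1) * K ^ α, ENNReal.mul_ne_top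
    (ENNReal.rpow_ne_top_of_nonneg hp1.le (ENNReal.add_ne_top.2 ⟨hC, hV⟩))
    (ENNReal.rpow_ne_top_of_nonneg hα0 hK), ?_⟩
  intro r hr x hx
  have hxpos : 0 < ‖x‖ := norm_pos_iff.2 hx
  by_cases hcase : ‖x‖ ≤ 2 * R * r
  · have hr0 : 0 < r := by
      rcases hr.eq_or_lt with h | h
      · rw [← h] at hcase; simp at hcase; exact absurd hcase hx
      · exact h
    refine aux _ (C + V) (ENNReal.ofReal r) _ (by simpa using hr0) ENNReal.ofReal_ne_top ?_ ?_
    · refine (hW r hr0 x).trans ?_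
      gcongr
      exact le_self_add
    · rw [← ofReal_norm x]
      calc ENNReal.ofReal ‖x‖ ≤ ENNReal.ofReal (2 * R * r) := ENNReal.ofReal_le_ofReal hcase
        _ = ENNReal.ofReal (2 * R) * ENNReal.ofReal r := ENNReal.ofReal_mul (by positivity)
        _ ≤ _ := by gcongr; exact le_self_add
  · push Not at hcase
    refine aux _ (C + V) (ENNReal.ofReal (‖x‖ / 2)) _ (by simpa using hxpos)
      ENNReal.ofReal_ne_top ?_ ?_
    · calc _ ≤ ∫⁻ h in Metric.closedBall (0 : Sp n) R, ENNReal.ofReal (‖x‖ / 2) ^ (-β) := by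
            refine setLIntegral_mono' Metric.isClosed_closedBall.measurableSet fun h hh => ?_
            have hh' : ‖h‖ ≤ R := by simpa using hh
            have h1 : ‖x‖ / 2 ≤ ‖x + r • h‖ := by
              have h2 : ‖x‖ ≤ ‖x + r • h‖ + ‖r • h‖ := by
                simpa using norm_sub_le (x + r • h) (r • h)
              have h3 : ‖r • h‖ ≤ r * R := by
                rw [norm_smul, Real.norm_of_nonneg hr]; gcongr
              linarith
            rw [ENNReal.rpow_neg, ENNReal.rpow_neg, ← ofReal_norm (x + r • h)]
            gcongr
        _ = V * ENNReal.ofReal (‖x‖ / 2) ^ (-β) := by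
            rw [setLIntegral_const, mul_comm]
        _ ≤ _ := by gcongr; exact le_add_self
    · rw [← ofReal_norm x]
      calc ENNReal.ofReal ‖x‖ = 2 * ENNReal.ofReal (‖x‖ / 2) := by
            generalize ‖x‖ = a
            rw [← ENNReal.ofReal_ofNat 2, ← ENNReal.ofReal_mul (by norm_num)]
            congr 1; ring
        _ ≤ _ := by gcongr; exact le_add_self

/-- Averages are bounded on `L^p(|x|^α)`, uniformly in the scale `r ≥ 0`. -/
lemma wLpE_ballAvg_le {n : ℕ} (hn : 1 ≤ n) {p α : ℝ} (hp : 1 < p) (hα0 : 0 ≤ α)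
    (hα : α < n * (p - 1)) {R : ℝ} (hR : 0 < R) :
    ∃ C : ℝ≥0∞, C ≠ ∞ ∧ ∀ (r : ℝ) (_ : 0 ≤ r) (G : Sp n → ℝ≥0∞) (_ : Measurable G),
      wLpE n p α (ballAvg n R r G) ≤ C * wLpE n p α G := by
  have hp0 : 0 < p := by linarith
  have hp1 : 0 < p - 1 := by linarith
  obtain ⟨C, hC, hW⟩ := weight_dual_le hn hp hα0 hα hR
  set V := volume (Metric.closedBall (0 : Sp n) R)
  have hV : V ≠ ∞ := measure_closedBall_lt_top.ne
  refine ⟨(C * V) ^ (1 / p), ENNReal.rpow_ne_top_of_nonneg (by positivity)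
    (ENNReal.mul_ne_top hC hV), ?_⟩
  intro r hr G hG
  have := nontrivial_sp hn
  have hne : ∀ᵐ x : Sp n, x ≠ 0 := by simp [ae_iff]
  set w : Sp n → ℝ≥0∞ := fun y => G y ^ p * ‖y‖ₑ ^ α with hw
  have hwm : Measurable w := by fun_prop
  have key : ∫⁻ x, ballAvg n R r G x ^ p * ‖x‖ₑ ^ α ≤ C * V * ∫⁻ y, w y := by
    calc ∫⁻ x, ballAvg n R r G x ^ p * ‖x‖ₑ ^ α
        ≤ ∫⁻ x, C * ∫⁻ h in Metric.closedBall (0 : Sp n) R, w (x + r • h) := by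
          refine lintegral_mono_ae ?_
          filter_upwards [hne] with x hx
          have H := ballAvg_le_holder (α := α) hp hG R r x (Or.inr hx)
          calc ballAvg n R r G x ^ p * ‖x‖ₑ ^ α
              ≤ ((∫⁻ h in Metric.closedBall (0 : Sp n) R, w (x + r • h)) ^ (1 / p) *
                (∫⁻ h in Metric.closedBall (0 : Sp n) R, ‖x + r • h‖ₑ ^ (-(α / (p - 1)))) ^
                  ((p - 1) / p)) ^ p * ‖x‖ₑ ^ α := by gcongr
            _ = (∫⁻ h in Metric.closedBall (0 : Sp n) R, w (x + r • h)) *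
                ((∫⁻ h in Metric.closedBall (0 : Sp n) R, ‖x + r • h‖ₑ ^ (-(α / (p - 1)))) ^
                  (p - 1) * ‖x‖ₑ ^ α) := by
                rw [ENNReal.mul_rpow_of_nonneg _ _ hp0.le, ← ENNReal.rpow_mul, ← ENNReal.rpow_mul,
                  one_div_mul_cancel hp0.ne', div_mul_cancel₀ _ hp0.ne', ENNReal.rpow_one, mul_assoc]
            _ ≤ (∫⁻ h in Metric.closedBall (0 : Sp n) R, w (x + r • h)) * C := by
                gcongr
                exact hW r hr x hx
            _ = _ := mul_comm _ _
      _ = C * ∫⁻ h in Metric.closedBall (0 : Sp n) R, ∫⁻ x, w (x + r • h) := by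
          rw [lintegral_const_mul' _ _ hC, lintegral_lintegral_swap]
          fun_prop
      _ = C * V * ∫⁻ y, w y := by
          simp_rw [lintegral_add_right_eq_self w]
          rw [setLIntegral_const]
          ring
  calc wLpE n p α (ballAvg n R r G) ≤ (C * V * ∫⁻ y, w y) ^ (1 / p) := by
        unfold wLpE
        gcongr
        exact key
    _ = _ := by
        rw [ENNReal.mul_rpow_of_nonneg _ _ (by positivity)]
        rfl

/-! ### The weighted norm -/

section wLpE

variable {n : ℕ} {p α : ℝ}

lemma wLpE_mono_ae (hp : 0 < p) {F G : Sp n → ℝ≥0∞} (h : ∀ᵐ x, F x ≤ G x) :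
    wLpE n p α F ≤ wLpE n p α G := by
  unfold wLpE
  refine ENNReal.rpow_le_rpow (lintegral_mono_ae ?_) (by positivity)
  filter_upwards [h] with x hx
  gcongr

lemma wLpE_mono (hp : 0 < p) {F G : Sp n → ℝ≥0∞} (h : ∀ x, F x ≤ G x) :
    wLpE n p α F ≤ wLpE n p α G :=
  wLpE_mono_ae hp (Eventually.of_forall h)

lemma wLpE_add_le (hp : 1 < p) {F G : Sp n → ℝ≥0∞} (hF : Measurable F) (hG : Measurable G) :
    wLpE n p α (fun x => F x + G x) ≤ wLpE n p α F + wLpE n p α G := by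
  have hp0 : 0 < p := by linarith
  have key : ∀ H : Sp n → ℝ≥0∞,
      wLpE n p α H = (∫⁻ x, (H x * ‖x‖ₑ ^ (α / p)) ^ p) ^ (1 / p) := by
    intro H
    unfold wLpE
    congr 1
    refine lintegral_congr fun x => ?_
    rw [ENNReal.mul_rpow_of_nonneg _ _ hp0.le, ← ENNReal.rpow_mul, div_mul_cancel₀ _ hp0.ne']
    rfl
  rw [key, key, key]
  refine le_trans (le_of_eq ?_) (ENNReal.lintegral_Lp_add_le (μ := volume)
    (f := fun x => F x * ‖x‖ₑ ^ (α / p)) (g := fun x => G x * ‖x‖ₑ ^ (α / p))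
    (by fun_prop) (by fun_prop) hp.le)
  congr 1
  refine lintegral_congr fun x => ?_
  simp only [Pi.add_apply, add_mul]

lemma wLpE_const_mul (hp : 0 < p) {c : ℝ≥0∞} (hc : c ≠ ∞) (F : Sp n → ℝ≥0∞) :
    wLpE n p α (fun x => c * F x) = c * wLpE n p α F := by
  unfold wLpE
  have : ∀ x : Sp n, (c * F x) ^ p * (‖x‖₊ : ℝ≥0∞) ^ α =
      c ^ p * (F x ^ p * (‖x‖₊ : ℝ≥0∞) ^ α) := by
    intro x
    rw [ENNReal.mul_rpow_of_nonneg _ _ hp.le, mul_assoc]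
  simp_rw [this]
  rw [lintegral_const_mul' _ _ (ENNReal.rpow_ne_top_of_nonneg hp.le hc),
    ENNReal.mul_rpow_of_nonneg _ _ (by positivity), ← ENNReal.rpow_mul,
    mul_one_div_cancel hp.ne', ENNReal.rpow_one]

lemma wLpE_zero (hp : 0 < p) : wLpE n p α (fun _ => 0) = 0 := by
  simpa using wLpE_const_mul (n := n) (α := α) hp (c := 0) (by simp) (fun _ => 0)

lemma wLpE_sum_le (hp : 1 < p) {ι : Type*} (s : Finset ι) (F : ι → Sp n → ℝ≥0∞)
    (hF : ∀ i, Measurable (F i)) :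
    wLpE n p α (fun x => ∑ i ∈ s, F i x) ≤ ∑ i ∈ s, wLpE n p α (F i) := by
  classical
  induction s using Finset.induction_on with
  | empty => simp [wLpE_zero (n := n) (α := α) (p := p) (by linarith)]
  | insert a s ha ih =>
    simp_rw [Finset.sum_insert ha]
    refine (wLpE_add_le hp (hF a) (Finset.measurable_sum _ fun i _ => hF i)).trans ?_
    gcongr

end wLpE

/-! ### Iterated differences -/

lemma iterDiff_eq {n M : ℕ} (f : Sp n → ℝ) (h x : Sp n) :
    iterDiff n M f h x = (fwdDiff h)^[M] f x := by
  rw [fwdDiff_iter_eq_sum_shift]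
  unfold iterDiff
  refine Finset.sum_congr rfl fun i _ => ?_
  rw [zsmul_eq_mul, Nat.cast_smul_eq_nsmul]
  push_cast
  ring

/-- A product rule bound: `l` plays the role of the ratio step/smoothness scale. -/
lemma enorm_fwdDiff_mul_le {n : ℕ} (l : ℝ≥0∞) (h : Sp n) : ∀ (M : ℕ) (u v : Sp n → ℝ) (x : Sp n)
    (U V : ℝ≥0∞), (∀ a i : ℕ, a + i ≤ M → ‖(fwdDiff h)^[a] u (x + i • h)‖ₑ ≤ l ^ a * U) →
    (∀ b ≤ M, ‖(fwdDiff h)^[b] v x‖ₑ ≤ l ^ b * V) →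
    ‖(fwdDiff h)^[M] (fun y => u y * v y) x‖ₑ ≤ 2 ^ M * l ^ M * U * V := by
  intro M
  induction M with
  | zero =>
    intro u v x U V hu hv
    have h1 := hu 0 0 (by simp)
    have h2 := hv 0 (by simp)
    simp only [Function.iterate_zero, id, zero_smul, add_zero, pow_zero, one_mul] at h1 h2 ⊢
    rw [enorm_mul]
    gcongr
  | succ M ih =>
    intro u v x U V hu hv
    have e : fwdDiff h (fun y => u y * v y) =
        (fun y => (fun z => u (z + h)) y * fwdDiff h v y) + (fun y => fwdDiff h u y * v y) := by
      ext y
      simp only [fwdDiff, Pi.add_apply]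
      ring
    rw [Function.iterate_succ_apply, e, fwdDiff_iter_add, Pi.add_apply]
    refine (enorm_add_le _ _).trans ?_
    have A := ih (fun z => u (z + h)) (fwdDiff h v) x U (l * V) (fun a i hai => by
      rw [fwdDiff_iter_comp_add]
      have := hu a (i + 1) (by omega)
      rwa [add_smul, one_smul, ← add_assoc] at this) (fun b hb => by
      rw [← Function.iterate_succ_apply]
      refine (hv (b + 1) (by omega)).trans (le_of_eq ?_)
      ring)
    have B := ih (fwdDiff h u) v x (l * U) V (fun a i hai => by
      rw [← Function.iterate_succ_apply]
      refine (hu (a + 1) i (by omega)).trans (le_of_eq ?_)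
      ring) (fun b hb => hv b (by omega))
    calc _ ≤ 2 ^ M * l ^ M * U * (l * V) + 2 ^ M * l ^ M * (l * U) * V := add_le_add A B
      _ = _ := by ring

lemma hasFDerivAt_fwdDiff_iter {E F : Type} [NormedAddCommGroup E] [NormedSpace ℝ E]
    [NormedAddCommGroup F] [NormedSpace ℝ F] (h : E) (r : ℕ) {φ : E → F} {φ' : E → E →L[ℝ] F}
    (hφ : ∀ x, HasFDerivAt φ (φ' x) x) (x : E) :
    HasFDerivAt ((fwdDiff h)^[r] φ) ((fwdDiff h)^[r] φ' x) x := by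
  induction r generalizing x with
  | zero => exact hφ x
  | succ r ih =>
    rw [Function.iterate_succ_apply', Function.iterate_succ_apply']
    exact ((hasFDerivAt_comp_add_right h).2 (ih (x + h))).sub (ih x)

/-- Differences of order `r` of a smooth compactly supported function are `O(|h|^r)`. -/
lemma norm_fwdDiff_iter_le {E : Type} [NormedAddCommGroup E] [NormedSpace ℝ E] (r : ℕ) :
    ∀ {F : Type} [NormedAddCommGroup F] [NormedSpace ℝ F] {φ : E → F}
    (_ : ContDiff ℝ (⊤ : ℕ∞) φ) (_ : HasCompactSupport φ),
    ∃ C : ℝ, 0 ≤ C ∧ ∀ h x : E, ‖(fwdDiff h)^[r] φ x‖ ≤ C * ‖h‖ ^ r := by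
  induction r with
  | zero =>
    intro F _ _ φ hφ hc
    obtain ⟨C, hC⟩ := hc.exists_bound_of_continuous hφ.continuous
    exact ⟨C, (norm_nonneg _).trans (hC 0), fun h x => by simpa using hC x⟩
  | succ r ih =>
    intro F _ _ φ hφ hc
    have hd : ContDiff ℝ (⊤ : ℕ∞) (fderiv ℝ φ) := hφ.fderiv_right (by norm_num)
    obtain ⟨C, hC0, hC⟩ := ih hd (hc.fderiv (𝕜 := ℝ))
    refine ⟨C, hC0, fun h x => ?_⟩
    rw [Function.iterate_succ_apply']
    have hD : ∀ y, HasFDerivAt ((fwdDiff h)^[r] φ) ((fwdDiff h)^[r] (fderiv ℝ φ) y) y :=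
      hasFDerivAt_fwdDiff_iter h r fun y =>
        (hφ.differentiable (by simp) y).hasFDerivAt
    have := convex_univ.norm_image_sub_le_of_norm_hasFDerivWithin_le (𝕜 := ℝ)
      (fun y _ => (hD y).hasFDerivWithinAt) (fun y _ => hC h y) (Set.mem_univ x)
      (Set.mem_univ (x + h))
    rw [add_sub_cancel_left] at this
    refine this.trans (le_of_eq ?_)
    ring

/-! ### The approximation kernel -/

/-- The smoothing operator at scale `τ` with kernel `K`. -/
def smoothOp {n : ℕ} (K : Sp n → ℝ) (τ : ℝ) (f : Sp n → ℝ) (x : Sp n) : ℝ :=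
  ∫ h, K h * f (x + τ • h)

/-- A smooth kernel supported in the ball of radius `M` whose approximation error at scale `t`
is controlled by the ball means of differences of order `M`. -/
structure IsKernel (n M : ℕ) (K : Sp n → ℝ) : Prop where
  smooth : ContDiff ℝ (⊤ : ℕ∞) K
  compact : HasCompactSupport K
  supp : ∀ h, (M : ℝ) < ‖h‖ → K h = 0
  approx : ∃ C : ℝ≥0∞, C ≠ ∞ ∧ ∀ f : Sp n → ℝ, ∀ t : ℝ, 0 < t → ∀ x : Sp n,
    (∀ r : ℝ, 0 < r → IntegrableOn (fun h => f (x + r • h)) (Metric.closedBall 0 1)) →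
    ‖f x - smoothOp K t f x‖ₑ ≤ C * ballMeans n M f t x

lemma integrable_kernel_mul {n : ℕ} {K g : Sp n → ℝ} {R : ℝ} (hK : Continuous K)
    (hs : ∀ h, R < ‖h‖ → K h = 0) (hg : IntegrableOn g (Metric.closedBall 0 R)) :
    Integrable (fun h => K h * g h) := by
  have h1 : IntegrableOn (fun h => K h * g h) (Metric.closedBall 0 R) :=
    hg.continuousOn_mul hK.continuousOn (isCompact_closedBall 0 R)
  rwa [integrableOn_iff_integrable_of_support_subset] at h1
  intro h hh
  by_contra hc
  simp only [Metric.mem_closedBall, dist_zero_right, not_le] at hc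
  exact hh (by simp [hs h hc])

/-- The kernel is `∑_{i=1}^M c_i i^{-n} ψ(·/i)` for a normalised bump `ψ` and signed binomial
coefficients `c_i`, so that `f - S_t f` is the `ψ`-average of `± Δ_{th}^M f`. -/
lemma exists_kernel (n M : ℕ) : ∃ K : Sp n → ℝ, IsKernel n M K := by
  let b : ContDiffBump (0 : Sp n) := ⟨1 / 2, 1, by norm_num, by norm_num⟩
  set ψ : Sp n → ℝ := b.normed volume with hψ
  have hψs : ContDiff ℝ (⊤ : ℕ∞) ψ := b.contDiff_normed
  have hψc : HasCompactSupport ψ := b.hasCompactSupport_normed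
  have hψ1 : ∫ h, ψ h = 1 := b.integral_normed
  have hψsupp : ∀ h, 1 < ‖h‖ → ψ h = 0 := by
    intro h hh
    by_contra hc
    have : h ∈ Function.support ψ := hc
    rw [hψ, b.support_normed_eq] at this
    simp only [Metric.mem_ball, dist_zero_right] at this
    have h2 : b.rOut = 1 := rfl
    linarith
  obtain ⟨B, hB⟩ := hψc.exists_bound_of_continuous hψs.continuous
  set c : ℕ → ℝ := fun i => -((-1 : ℝ) ^ M * ((-1 : ℝ) ^ (M - (i + 1)) * (M.choose (i + 1) : ℝ)))
    with hc
  set K : Sp n → ℝ := fun h => ∑ i ∈ Finset.range M,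
    c i * (((i + 1 : ℝ) ^ n)⁻¹ * ψ ((i + 1 : ℝ)⁻¹ • h)) with hK
  have hterm : ∀ i : ℕ, ∀ h : Sp n, (i + 1 : ℝ) < ‖h‖ → ψ ((i + 1 : ℝ)⁻¹ • h) = 0 := by
    intro i h hh
    apply hψsupp
    have hi : (0 : ℝ) < i + 1 := by positivity
    rw [norm_smul, norm_inv, Real.norm_of_nonneg hi.le, inv_mul_eq_div, lt_div_iff₀ hi]
    simpa using hh
  have hKsupp : ∀ h, (M : ℝ) < ‖h‖ → K h = 0 := by
    intro h hh
    refine Finset.sum_eq_zero fun i hi => ?_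
    rw [hterm i h, mul_zero, mul_zero]
    have : ((i + 1 : ℕ) : ℝ) ≤ M := by exact_mod_cast Finset.mem_range.1 hi
    push_cast at this
    linarith
  refine ⟨K, ?_, ?_, hKsupp, ENNReal.ofReal B, ENNReal.ofReal_ne_top, ?_⟩
  · refine ContDiff.sum fun i _ => contDiff_const.mul (contDiff_const.mul (hψs.comp ?_))
    exact contDiff_const_smul _
  · refine HasCompactSupport.of_support_subset_isCompact (isCompact_closedBall (0 : Sp n) M) ?_
    intro h hh
    by_contra hcc
    simp only [Metric.mem_closedBall, dist_zero_right, not_le] at hcc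
    exact hh (hKsupp h hcc)
  · intro f t ht x hf
    have hInt : ∀ r : ℝ, 0 < r → Integrable (fun h => ψ h * f (x + r • h)) := fun r hr =>
      integrable_kernel_mul hψs.continuous hψsupp (hf r hr)
    have hscale : ∀ i : ℕ, (fun h : Sp n => ψ ((i + 1 : ℝ)⁻¹ • h) * f (x + t • h)) =
        fun h => (fun k => ψ k * f (x + ((i + 1 : ℝ) * t) • k)) ((i + 1 : ℝ)⁻¹ • h) := by
      intro i
      ext h
      have hi : (i + 1 : ℝ) ≠ 0 := by positivity
      have : ((i + 1 : ℝ) * t) • (i + 1 : ℝ)⁻¹ • h = t • h := by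
        rw [smul_smul]
        congr 1
        field_simp
      simp only [this]
    have hS : smoothOp K t f x =
        ∑ i ∈ Finset.range M, c i * ∫ h, ψ h * f (x + ((i + 1 : ℝ) * t) • h) := by
      unfold smoothOp
      simp only [hK, Finset.sum_mul]
      rw [integral_finsetSum]
      · refine Finset.sum_congr rfl fun i _ => ?_
        have e : ∀ h : Sp n, c i * (((i + 1 : ℝ) ^ n)⁻¹ * ψ ((i + 1 : ℝ)⁻¹ • h)) * f (x + t • h) =
            (c i * ((i + 1 : ℝ) ^ n)⁻¹) * (ψ ((i + 1 : ℝ)⁻¹ • h) * f (x + t • h)) := by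
          intro h; ring
        simp_rw [e]
        rw [integral_const_mul, hscale i, Measure.integral_comp_inv_smul volume
          (fun k => ψ k * f (x + ((i + 1 : ℝ) * t) • k))]
        have hi : (0 : ℝ) < (i + 1 : ℝ) ^ n := by positivity
        simp only [finrank_euclideanSpace, Fintype.card_fin, smul_eq_mul]
        rw [abs_of_pos hi]
        field_simp
      · intro i _
        have hi : (i + 1 : ℝ) ≠ 0 := by positivity
        have h1 : Integrable (fun h : Sp n => ψ ((i + 1 : ℝ)⁻¹ • h) * f (x + t • h)) := by
          rw [hscale i]
          exact (hInt ((i + 1 : ℝ) * t) (by positivity)).comp_smul (inv_ne_zero hi)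
        refine (h1.const_mul (c i * ((i + 1 : ℝ) ^ n)⁻¹)).congr (Eventually.of_forall fun h => ?_)
        simp only
        ring
    have hdiff : f x - smoothOp K t f x =
        ∫ h, (-1 : ℝ) ^ M * (ψ h * iterDiff n M f (t • h) x) := by
      have e : ∀ h : Sp n, (-1 : ℝ) ^ M * (ψ h * iterDiff n M f (t • h) x) =
          ψ h * f x - ∑ i ∈ Finset.range M, c i * (ψ h * f (x + ((i + 1 : ℝ) * t) • h)) := by
        intro h
        unfold iterDiff
        rw [Finset.sum_range_succ', mul_add, mul_add, Finset.mul_sum, Finset.mul_sum]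
        have h0 : (-1 : ℝ) ^ M * (ψ h * ((-1) ^ (M - 0) * (M.choose 0 : ℝ) *
            f (x + ((0 : ℕ) : ℝ) • t • h))) = ψ h * f x := by
          simp only [Nat.sub_zero, Nat.choose_zero_right, Nat.cast_one, mul_one, Nat.cast_zero,
            zero_smul, add_zero]
          have : (-1 : ℝ) ^ M * (-1) ^ M = 1 := by
            rw [← mul_pow]; simp
          linear_combination (ψ h * f x) * this
        rw [h0, add_comm, sub_eq_add_neg, ← Finset.sum_neg_distrib]
        congr 1
        refine Finset.sum_congr rfl fun i _ => ?_
        rw [smul_smul]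
        push_cast
        simp only [hc]
        ring
      simp_rw [e]
      rw [integral_sub, integral_mul_const, hψ1, one_mul, integral_finsetSum, hS]
      · simp_rw [integral_const_mul]
      · intro i _
        exact (hInt _ (by positivity)).const_mul _
      · exact (hψs.continuous.integrable_of_hasCompactSupport hψc).mul_const _
      · exact integrable_finsetSum _ fun i _ => (hInt _ (by positivity)).const_mul _
    rw [hdiff]
    refine (enorm_integral_le_lintegral_enorm _).trans ?_
    unfold ballMeans
    rw [← lintegral_const_mul' _ _ ENNReal.ofReal_ne_top, ← lintegral_indicator
      (by exact (isClosed_le continuous_norm continuous_const).measurableSet)]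
    refine lintegral_mono fun h => ?_
    by_cases hh : ‖h‖ ≤ 1
    · rw [Set.indicator_of_mem (by exact hh)]
      rw [enorm_mul, enorm_mul]
      have h1 : ‖(-1 : ℝ) ^ M‖ₑ = 1 := by
        rw [← ofReal_norm]; simp
      rw [h1, one_mul]
      gcongr
      · rw [← ofReal_norm]
        exact ENNReal.ofReal_le_ofReal (hB h)
      · exact le_rfl
    · simp [hψsupp h (not_le.1 hh)]

/-! ### Smoothing operators on the weighted Lebesgue space -/

/-- The parameter range for which `|x|^α`, `α ≥ 0`, is a Muckenhoupt `A_p` weight on `ℝ^n`. -/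
structure Adm (n : ℕ) (p α : ℝ) : Prop where
  hn : 1 ≤ n
  hp : 1 < p
  hα0 : 0 ≤ α
  hα : α < n * (p - 1)

lemma Adm.p_pos {n : ℕ} {p α : ℝ} (h : Adm n p α) : 0 < p := by linarith [h.hp]

/-- Membership in the weighted Lebesgue space `L^p(|x|^α)`. -/
structure MemW (n : ℕ) (p α : ℝ) (f : Sp n → ℝ) : Prop where
  meas : Measurable f
  fin : wLp n p α f ≠ ∞

section smoothOp

variable {n M : ℕ} {p α : ℝ} {K : Sp n → ℝ}

lemma MemW.integrableOn (A : Adm n p α) {f : Sp n → ℝ} (hf : MemW n p α f) (x : Sp n) {r : ℝ}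
    (hr : 0 < r) (R : ℝ) : IntegrableOn (fun h => f (x + r • h)) (Metric.closedBall 0 R) := by
  obtain ⟨C, hC, h⟩ := ballAvg_le_wLpE A.hn A.hp A.hα0 A.hα R
  refine ⟨(hf.meas.comp (by fun_prop)).aestronglyMeasurable, ?_⟩
  refine lt_of_le_of_lt (h r hr (fun y => ‖f y‖ₑ) (by have := hf.meas; fun_prop) x) ?_
  exact ENNReal.mul_lt_top (ENNReal.mul_lt_top hC.lt_top ENNReal.ofReal_lt_top) hf.fin.lt_top

lemma MemW.sub (A : Adm n p α) {f g : Sp n → ℝ} (hf : MemW n p α f) (hg : MemW n p α g) :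
    MemW n p α (fun x => f x - g x) := by
  have h1 := hf.meas
  have h2 := hg.meas
  refine ⟨by fun_prop, ?_⟩
  have : wLp n p α (fun x => f x - g x) ≤ wLp n p α f + wLp n p α g := by
    refine le_trans ?_ (wLpE_add_le A.hp (F := fun x => ‖f x‖ₑ) (G := fun x => ‖g x‖ₑ)
      (by fun_prop) (by fun_prop))
    exact wLpE_mono A.p_pos fun x => enorm_sub_le
  exact ne_top_of_le_ne_top (ENNReal.add_ne_top.2 ⟨hf.fin, hg.fin⟩) this

lemma measurable_smoothOp (hK : Continuous K) (τ : ℝ) {f : Sp n → ℝ} (hf : Measurable f) :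
    Measurable (smoothOp K τ f) := by
  have hm : Measurable (fun z : Sp n × Sp n => K z.2 * f (z.1 + τ • z.2)) := by
    have := hK.measurable
    fun_prop
  exact (hm.stronglyMeasurable.integral_prod_right' (ν := volume)).measurable

lemma IsKernel.enorm_le (hK : IsKernel n M K) : ∃ C : ℝ≥0∞, C ≠ ∞ ∧ ∀ h, ‖K h‖ₑ ≤ C := by
  obtain ⟨B, hB⟩ := hK.compact.exists_bound_of_continuous hK.smooth.continuous
  refine ⟨ENNReal.ofReal B, ENNReal.ofReal_ne_top, fun h => ?_⟩
  rw [← ofReal_norm]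
  exact ENNReal.ofReal_le_ofReal (hB h)

lemma enorm_smoothOp_le (hK : IsKernel n M K) : ∃ C : ℝ≥0∞, C ≠ ∞ ∧ ∀ (τ : ℝ) (f : Sp n → ℝ) x,
    ‖smoothOp K τ f x‖ₑ ≤ C * ballAvg n (2 * M) τ (fun y => ‖f y‖ₑ) x := by
  obtain ⟨C, hC, hB⟩ := hK.enorm_le
  refine ⟨C, hC, fun τ f x => ?_⟩
  refine (enorm_integral_le_lintegral_enorm _).trans ?_
  unfold ballAvg
  rw [← lintegral_const_mul' _ _ hC, ← lintegral_indicator Metric.isClosed_closedBall.measurableSet]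
  refine lintegral_mono fun h => ?_
  by_cases hh : ‖h‖ ≤ 2 * M
  · rw [Set.indicator_of_mem (by simpa using hh), enorm_mul]
    gcongr
    exact hB h
  · have : K h = 0 := hK.supp h (by
      have : (0 : ℝ) ≤ M := by positivity
      linarith)
    simp [this]

/-- Differences of `smoothOp K τ f` gain a factor `(|h| / τ)^r`: the difference operator is moved
onto the kernel by a change of variables. -/
lemma enorm_fwdDiff_smoothOp_le (A : Adm n p α) (hK : IsKernel n M K) :
    ∃ C : ℝ≥0∞, C ≠ ∞ ∧ ∀ (f : Sp n → ℝ) (_ : MemW n p α f) (τ : ℝ) (_ : 0 < τ) (h : Sp n)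
      (_ : ‖h‖ ≤ τ) (r : ℕ) (_ : r ≤ M) (x : Sp n),
      ‖(fwdDiff h)^[r] (smoothOp K τ f) x‖ₑ ≤
        ENNReal.ofReal (‖h‖ / τ) ^ r * (C * ballAvg n (2 * M) τ (fun y => ‖f y‖ₑ) x) := by
  choose B hB0 hB using fun r : ℕ => norm_fwdDiff_iter_le r hK.smooth hK.compact
  refine ⟨ENNReal.ofReal (∑ r ∈ Finset.range (M + 1), B r), ENNReal.ofReal_ne_top, ?_⟩
  intro f hf τ hτ h hh r hr x
  have hBr : B r ≤ ∑ r ∈ Finset.range (M + 1), B r :=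
    Finset.single_le_sum (fun i _ => hB0 i) (Finset.mem_range.2 (by omega))
  set k : Sp n := -(τ⁻¹ • h) with hk
  have hknorm : ‖k‖ = ‖h‖ / τ := by
    rw [hk, norm_neg, norm_smul, norm_inv, Real.norm_of_nonneg hτ.le]; field_simp
  have hk1 : ‖k‖ ≤ 1 := by rw [hknorm]; exact (div_le_one hτ).2 hh
  have hshift : ∀ i : ℕ, smoothOp K τ f (x + i • h) = ∫ y, K (y + i • k) * f (x + τ • y) := by
    intro i
    have e : ∀ y : Sp n, K y * f (x + i • h + τ • y) =
        (fun y => K (y + i • k) * f (x + τ • y)) (y + i • (τ⁻¹ • h)) := by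
      intro y
      have e1 : y + i • τ⁻¹ • h + i • k = y := by rw [hk, smul_neg]; abel
      have e2 : x + τ • (y + i • τ⁻¹ • h) = x + i • h + τ • y := by
        rw [smul_add, smul_comm τ i, smul_smul, mul_inv_cancel₀ hτ.ne', one_smul]; abel
      simp only [e1, e2]
    unfold smoothOp
    simp_rw [e]
    rw [integral_add_right_eq_self (fun y => K (y + i • k) * f (x + τ • y))]
  have hInt : ∀ i ≤ M, Integrable (fun y => K (y + i • k) * f (x + τ • y)) := by
    intro i hi
    refine integrable_kernel_mul (R := 2 * M) (hK.smooth.continuous.comp (by fun_prop)) ?_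
      (hf.integrableOn A x hτ _)
    intro y hy
    apply hK.supp
    have h1 : ‖i • k‖ ≤ M := by
      rw [← Nat.cast_smul_eq_nsmul ℝ, norm_smul]
      simp only [Real.norm_natCast]
      have : (i : ℝ) ≤ M := by exact_mod_cast hi
      calc (i : ℝ) * ‖k‖ ≤ M * 1 := by gcongr
        _ = M := mul_one _
    have h2 : ‖y‖ ≤ ‖y + i • k‖ + ‖i • k‖ := by simpa using norm_sub_le (y + i • k) (i • k)
    linarith
  have hmain : (fwdDiff h)^[r] (smoothOp K τ f) x =
      ∫ y, (fwdDiff k)^[r] K y * f (x + τ • y) := by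
    simp_rw [fwdDiff_iter_eq_sum_shift, Finset.sum_mul]
    rw [integral_finsetSum]
    · refine Finset.sum_congr rfl fun i _ => ?_
      rw [hshift i]
      simp_rw [zsmul_eq_mul, mul_assoc]
      rw [integral_const_mul]
    · intro i hi
      have := hInt i (by have := Finset.mem_range.1 hi; omega)
      simp_rw [zsmul_eq_mul, mul_assoc]
      exact this.const_mul _
  rw [hmain]
  refine (enorm_integral_le_lintegral_enorm _).trans ?_
  unfold ballAvg
  rw [← mul_assoc, ← lintegral_const_mul' _ _ (ENNReal.mul_ne_top (by finiteness)
    ENNReal.ofReal_ne_top), ← lintegral_indicator Metric.isClosed_closedBall.measurableSet]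
  refine lintegral_mono fun y => ?_
  by_cases hy : ‖y‖ ≤ 2 * M
  · rw [Set.indicator_of_mem (by simpa using hy), enorm_mul]
    gcongr
    rw [← ofReal_norm, ← ENNReal.ofReal_pow (by positivity), ← ENNReal.ofReal_mul (by positivity)]
    refine ENNReal.ofReal_le_ofReal ((hB r k y).trans ?_)
    rw [hknorm, mul_comm]
    gcongr
  · have hz : (fwdDiff k)^[r] K y = 0 := by
      rw [fwdDiff_iter_eq_sum_shift]
      refine Finset.sum_eq_zero fun i hi => ?_
      have hi' : i ≤ M := by have := Finset.mem_range.1 hi; omega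
      rw [hK.supp, smul_zero]
      have h1 : ‖i • k‖ ≤ M := by
        rw [← Nat.cast_smul_eq_nsmul ℝ, norm_smul]
        simp only [Real.norm_natCast]
        have : (i : ℝ) ≤ M := by exact_mod_cast hi'
        calc (i : ℝ) * ‖k‖ ≤ M * 1 := by gcongr
          _ = M := mul_one _
      have h2 : ‖y‖ ≤ ‖y + i • k‖ + ‖i • k‖ := by simpa using norm_sub_le (y + i • k) (i • k)
      linarith
    simp [hz]

lemma wLp_smoothOp_le (A : Adm n p α) (hM : 1 ≤ M) (hK : IsKernel n M K) :
    ∃ C : ℝ≥0∞, C ≠ ∞ ∧ ∀ (τ : ℝ) (_ : 0 < τ) (f : Sp n → ℝ) (_ : Measurable f),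
      wLp n p α (smoothOp K τ f) ≤ C * wLp n p α f := by
  obtain ⟨C, hC, h⟩ := enorm_smoothOp_le hK
  obtain ⟨C', hC', h'⟩ := wLpE_ballAvg_le A.hn A.hp A.hα0 A.hα (R := 2 * M)
    (by have : (1 : ℝ) ≤ M := by exact_mod_cast hM
        positivity)
  refine ⟨C * C', ENNReal.mul_ne_top hC hC', fun τ hτ f hf => ?_⟩
  refine (wLpE_mono A.p_pos (h τ f)).trans ?_
  rw [wLpE_const_mul A.p_pos hC, mul_assoc]
  gcongr
  exact h' τ hτ.le _ (by fun_prop)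

lemma MemW.smoothOp (A : Adm n p α) (hM : 1 ≤ M) (hK : IsKernel n M K) {f : Sp n → ℝ}
    (hf : MemW n p α f) {τ : ℝ} (hτ : 0 < τ) : MemW n p α (smoothOp K τ f) := by
  obtain ⟨C, hC, h⟩ := wLp_smoothOp_le A hM hK
  exact ⟨measurable_smoothOp hK.smooth.continuous τ hf.meas,
    ne_top_of_le_ne_top (ENNReal.mul_ne_top hC hf.fin) (h τ hτ f hf.meas)⟩

lemma smoothOp_sub (A : Adm n p α) (hK : IsKernel n M K) {f g : Sp n → ℝ}
    (hf : MemW n p α f) (hg : MemW n p α g) {τ : ℝ} (hτ : 0 < τ) (x : Sp n) :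
    smoothOp K τ (fun y => f y - g y) x = smoothOp K τ f x - smoothOp K τ g x := by
  unfold smoothOp
  simp_rw [mul_sub]
  exact integral_sub
    (integrable_kernel_mul hK.smooth.continuous hK.supp (hf.integrableOn A x hτ _))
    (integrable_kernel_mul hK.smooth.continuous hK.supp (hg.integrableOn A x hτ _))

lemma smoothOp_comm (A : Adm n p α) (hK : IsKernel n M K) {f : Sp n → ℝ}
    (hf : MemW n p α f) {a b : ℝ} (hb : 0 < b) (x : Sp n) :
    smoothOp K a (smoothOp K b f) x = smoothOp K b (smoothOp K a f) x := by
  obtain ⟨C, hC, h⟩ := ballAvg_le_wLpE A.hn A.hp A.hα0 A.hα (2 * M)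
  obtain ⟨B, hB, hKB⟩ := hK.enorm_le
  have hm := hf.meas
  have hKm := hK.smooth.continuous.measurable
  unfold smoothOp
  simp_rw [← integral_const_mul]
  have hi : Integrable (Function.uncurry fun y z : Sp n => K y * (K z * f (x + a • y + b • z)))
      (volume.prod volume) := by
    refine ⟨Measurable.aestronglyMeasurable (by unfold Function.uncurry; fun_prop), ?_⟩
    unfold HasFiniteIntegral
    rw [lintegral_prod _ (by unfold Function.uncurry; fun_prop)]
    set D := B * (C * ENNReal.ofReal (b ^ (-((n + α) / p))) * wLp n p α f) with hD
    have hDt : D ≠ ∞ := ENNReal.mul_ne_top hB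
      (ENNReal.mul_ne_top (ENNReal.mul_ne_top hC ENNReal.ofReal_ne_top) hf.fin)
    have hin : ∀ y : Sp n, ∫⁻ z, ‖K z * f (x + a • y + b • z)‖ₑ ≤ D := by
      intro y
      calc ∫⁻ z, ‖K z * f (x + a • y + b • z)‖ₑ
          ≤ B * ballAvg n (2 * M) b (fun y => ‖f y‖ₑ) (x + a • y) := by
            unfold ballAvg
            rw [← lintegral_const_mul' _ _ hB,
              ← lintegral_indicator Metric.isClosed_closedBall.measurableSet]
            refine lintegral_mono fun h => ?_
            by_cases hh : ‖h‖ ≤ 2 * M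
            · rw [Set.indicator_of_mem (by simpa using hh), enorm_mul]
              gcongr
              exact hKB h
            · have : K h = 0 := hK.supp h (by
                have : (0 : ℝ) ≤ M := by positivity
                linarith)
              simp [this]
        _ ≤ D := by
            rw [hD]
            gcongr
            exact h b hb (fun y => ‖f y‖ₑ) (by fun_prop) _
    calc _ = ∫⁻ y, ‖K y‖ₑ * ∫⁻ z, ‖K z * f (x + a • y + b • z)‖ₑ := by
          refine lintegral_congr fun y => ?_
          rw [← lintegral_const_mul' _ _ enorm_ne_top]
          refine lintegral_congr fun z => ?_
          simp [Function.uncurry]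
      _ ≤ ∫⁻ y, ‖K y‖ₑ * D := by
          gcongr with y
          exact hin y
      _ = (∫⁻ y, ‖K y‖ₑ) * D := lintegral_mul_const' _ _ hDt
      _ < ∞ := ENNReal.mul_lt_top
          (hK.smooth.continuous.integrable_of_hasCompactSupport hK.compact).2 hDt.lt_top
  rw [integral_integral_swap hi]
  refine integral_congr_ae (Eventually.of_forall fun y => ?_)
  refine integral_congr_ae (Eventually.of_forall fun z => ?_)
  simp only
  have : x + a • z + b • y = x + b • y + a • z := by abel
  rw [this]
  ring

lemma ballAvg_le_of_ae_le {R r : ℝ} (hr : 0 < r) {G : Sp n → ℝ≥0∞} {V : ℝ≥0∞}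
    (h : ∀ᵐ y, G y ≤ V) (x : Sp n) :
    ballAvg n R r G x ≤ V * volume (Metric.closedBall (0 : Sp n) R) := by
  have h1 : ∀ᵐ y : Sp n, G (x + r • y) ≤ V := by
    rw [ae_iff] at h ⊢
    have h2 : volume ((fun y => x + y) ⁻¹' {y | ¬ G y ≤ V}) = 0 := by
      rw [measure_preimage_add]; exact h
    have h3 := Measure.addHaar_preimage_smul (volume : Measure (Sp n)) hr.ne'
      ((fun y => x + y) ⁻¹' {y | ¬ G y ≤ V})
    rw [h2, mul_zero] at h3
    exact h3
  calc ballAvg n R r G x ≤ ∫⁻ _ in Metric.closedBall (0 : Sp n) R, V :=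
        lintegral_mono_ae (ae_restrict_of_ae h1)
    _ = _ := by rw [setLIntegral_const]

lemma enorm_smoothOp_le_of_ae_le (hK : IsKernel n M K) :
    ∃ C : ℝ≥0∞, C ≠ ∞ ∧ ∀ (τ : ℝ) (_ : 0 < τ) (f : Sp n → ℝ) (V : ℝ≥0∞)
      (_ : ∀ᵐ y, ‖f y‖ₑ ≤ V) (x : Sp n), ‖smoothOp K τ f x‖ₑ ≤ C * V := by
  obtain ⟨C, hC, h⟩ := enorm_smoothOp_le hK
  refine ⟨C * volume (Metric.closedBall (0 : Sp n) (2 * M)),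
    ENNReal.mul_ne_top hC measure_closedBall_lt_top.ne, fun τ hτ f V hf x => ?_⟩
  refine (h τ f x).trans ?_
  rw [mul_assoc, mul_comm (volume _)]
  gcongr
  exact ballAvg_le_of_ae_le hτ hf x

end smoothOp

/-! ### The modulus of smoothness in the weighted norm -/

/-- The weighted `L^p` norm of the ball means of differences at scale `t`. -/
def modD (n : ℕ) (p α : ℝ) (M : ℕ) (f : Sp n → ℝ) (t : ℝ) : ℝ≥0∞ :=
  wLpE n p α (ballMeans n M f t)

section modD

variable {n M : ℕ} {p α : ℝ} {K : Sp n → ℝ}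

lemma ballMeans_eq (f : Sp n → ℝ) (t : ℝ) (x : Sp n) :
    ballMeans n M f t x = ∫⁻ h in Metric.closedBall (0 : Sp n) 1, ‖iterDiff n M f (t • h) x‖ₑ := by
  unfold ballMeans
  have : {h : Sp n | ‖h‖ ≤ 1} = Metric.closedBall (0 : Sp n) 1 := by ext; simp
  rw [this]
  rfl

lemma measurable_ballMeans_uncurry {f : Sp n → ℝ} (hf : Measurable f) :
    Measurable (fun z : ℝ × Sp n => ballMeans n M f z.1 z.2) := by
  simp_rw [ballMeans_eq]
  refine Measurable.lintegral_prod_right'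
    (f := fun w : (ℝ × Sp n) × Sp n => ‖iterDiff n M f (w.1.1 • w.2) w.1.2‖ₑ) ?_
  unfold iterDiff
  fun_prop

lemma measurable_ballMeans {f : Sp n → ℝ} (hf : Measurable f) (t : ℝ) :
    Measurable (ballMeans n M f t) := by
  have h : ballMeans n M f t = fun x => ∫⁻ h in Metric.closedBall (0 : Sp n) 1,
      ‖iterDiff n M f (t • h) x‖ₑ := funext fun x => ballMeans_eq f t x
  rw [h]
  refine Measurable.lintegral_prod_right'
    (f := fun w : Sp n × Sp n => ‖iterDiff n M f (t • w.2) w.1‖ₑ) ?_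
  unfold iterDiff
  fun_prop

lemma measurable_modD {f : Sp n → ℝ} (hf : Measurable f) : Measurable (modD n p α M f) := by
  unfold modD wLpE
  refine Measurable.pow_const (Measurable.lintegral_prod_right'
    (f := fun z : ℝ × Sp n => ballMeans n M f z.1 z.2 ^ p * (‖z.2‖₊ : ℝ≥0∞) ^ α) ?_) _
  have := measurable_ballMeans_uncurry (M := M) hf
  fun_prop

lemma iterDiff_add (f g : Sp n → ℝ) (h x : Sp n) :
    iterDiff n M (fun y => f y + g y) h x = iterDiff n M f h x + iterDiff n M g h x := by
  unfold iterDiff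
  rw [← Finset.sum_add_distrib]
  exact Finset.sum_congr rfl fun i _ => by ring

lemma modD_add_le (hp : 1 < p) {f g : Sp n → ℝ} (hf : Measurable f) (hg : Measurable g) (t : ℝ) :
    modD n p α M (fun y => f y + g y) t ≤ modD n p α M f t + modD n p α M g t := by
  refine le_trans (wLpE_mono (by linarith) fun x => ?_)
    (wLpE_add_le hp (measurable_ballMeans hf t) (measurable_ballMeans hg t))
  simp_rw [ballMeans_eq, iterDiff_add]
  rw [← lintegral_add_left (by unfold iterDiff; fun_prop)]
  exact lintegral_mono fun h => enorm_add_le _ _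

lemma modD_zero (hp : 0 < p) (t : ℝ) : modD n p α M (fun _ => 0) t = 0 := by
  have : ballMeans n M (fun _ => 0) t = fun _ => 0 := by
    ext x
    simp [ballMeans_eq, iterDiff]
  rw [modD, this, wLpE_zero hp]

lemma modD_sum_le (hp : 1 < p) {ι : Type*} (s : Finset ι) (f : ι → Sp n → ℝ)
    (hf : ∀ i, Measurable (f i)) (t : ℝ) :
    modD n p α M (fun x => ∑ i ∈ s, f i x) t ≤ ∑ i ∈ s, modD n p α M (f i) t := by
  classical
  induction s using Finset.induction_on with
  | empty => simp [modD_zero (n := n) (α := α) (M := M) (p := p) (by linarith)]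
  | insert a s ha ih =>
    simp_rw [Finset.sum_insert ha]
    refine (modD_add_le hp (hf a) (Finset.measurable_sum _ fun i _ => hf i) t).trans ?_
    gcongr

lemma lintegral_ball_one_le_ballAvg (hM : 1 ≤ M) (G : Sp n → ℝ≥0∞) (r : ℝ) (x : Sp n) :
    ∫⁻ h in Metric.closedBall (0 : Sp n) 1, G (x + r • h) ≤ ballAvg n (2 * M) r G x := by
  unfold ballAvg
  refine lintegral_mono_set (Metric.closedBall_subset_closedBall ?_)
  have : (1 : ℝ) ≤ M := by exact_mod_cast hM
  linarith

lemma two_mul_pos_of_one_le (hM : 1 ≤ M) : (0 : ℝ) < 2 * M := by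
  have : (1 : ℝ) ≤ M := by exact_mod_cast hM
  positivity

lemma modD_le_wLp (A : Adm n p α) (hM : 1 ≤ M) :
    ∃ C : ℝ≥0∞, C ≠ ∞ ∧ ∀ (f : Sp n → ℝ) (_ : Measurable f) (t : ℝ) (_ : 0 ≤ t),
      modD n p α M f t ≤ C * wLp n p α f := by
  obtain ⟨C, hC, h⟩ := wLpE_ballAvg_le A.hn A.hp A.hα0 A.hα (two_mul_pos_of_one_le hM)
  refine ⟨∑ i ∈ Finset.range (M + 1), (M.choose i : ℝ≥0∞) * C,
    (ENNReal.sum_lt_top.2 fun i _ => ENNReal.mul_lt_top (by simp) hC.lt_top).ne, ?_⟩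
  intro f hf t ht
  have hfm : Measurable (fun y => ‖f y‖ₑ) := by fun_prop
  have hpt : ∀ x, ballMeans n M f t x ≤ ∑ i ∈ Finset.range (M + 1),
      (M.choose i : ℝ≥0∞) * ballAvg n (2 * M) (i * t) (fun y => ‖f y‖ₑ) x := by
    intro x
    rw [ballMeans_eq]
    calc _ ≤ ∫⁻ h in Metric.closedBall (0 : Sp n) 1, ∑ i ∈ Finset.range (M + 1),
          (M.choose i : ℝ≥0∞) * ‖f (x + (i * t) • h)‖ₑ := by
          refine lintegral_mono fun h => ?_
          unfold iterDiff
          refine (enorm_sum_le _ _).trans (Finset.sum_le_sum fun i _ => ?_)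
          rw [smul_smul, enorm_mul, enorm_mul]
          have h1 : ‖(-1 : ℝ) ^ (M - i)‖ₑ = 1 := by rw [← ofReal_norm]; simp
          have h2 : ‖(M.choose i : ℝ)‖ₑ = (M.choose i : ℝ≥0∞) := by
            rw [Real.enorm_eq_ofReal (by positivity), ENNReal.ofReal_natCast]
          rw [h1, h2, one_mul]
      _ = ∑ i ∈ Finset.range (M + 1), (M.choose i : ℝ≥0∞) *
          ∫⁻ h in Metric.closedBall (0 : Sp n) 1, ‖f (x + (i * t) • h)‖ₑ := by
          rw [lintegral_finsetSum _ fun i _ => by fun_prop]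
          refine Finset.sum_congr rfl fun i _ => ?_
          rw [lintegral_const_mul' _ _ (by simp)]
      _ ≤ _ := by
          gcongr with i _
          exact lintegral_ball_one_le_ballAvg hM (fun y => ‖f y‖ₑ) _ x
  refine (wLpE_mono A.p_pos hpt).trans ?_
  refine (wLpE_sum_le A.hp _ (fun i x => (M.choose i : ℝ≥0∞) *
    ballAvg n (2 * M) (i * t) (fun y => ‖f y‖ₑ) x) fun i =>
      (measurable_ballAvg _ _ hfm).const_mul _).trans ?_
  rw [Finset.sum_mul]
  refine Finset.sum_le_sum fun i _ => ?_
  rw [wLpE_const_mul A.p_pos (by simp), mul_assoc]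
  gcongr
  exact h _ (by positivity) _ hfm

lemma wLp_sub_smoothOp_le (A : Adm n p α) (hK : IsKernel n M K) :
    ∃ C : ℝ≥0∞, C ≠ ∞ ∧ ∀ (f : Sp n → ℝ) (_ : MemW n p α f) (t : ℝ) (_ : 0 < t),
      wLp n p α (fun x => f x - smoothOp K t f x) ≤ C * modD n p α M f t := by
  obtain ⟨C, hC, h⟩ := hK.approx
  refine ⟨C, hC, fun f hf t ht => ?_⟩
  rw [modD, ← wLpE_const_mul A.p_pos hC]
  exact wLpE_mono A.p_pos fun x => h f t ht x fun r hr => hf.integrableOn A x hr 1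

lemma wLp_add_le (hp : 1 < p) {f g : Sp n → ℝ} (hf : Measurable f) (hg : Measurable g) :
    wLp n p α (fun x => f x + g x) ≤ wLp n p α f + wLp n p α g := by
  refine le_trans ?_ (wLpE_add_le hp (F := fun x => ‖f x‖ₑ) (G := fun x => ‖g x‖ₑ)
      (by fun_prop) (by fun_prop))
  exact wLpE_mono (by linarith) fun x => enorm_add_le _ _

lemma wLp_sub_comm (f g : Sp n → ℝ) :
    wLp n p α (fun x => f x - g x) = wLp n p α (fun x => g x - f x) := by
  unfold wLp
  congr 1
  ext x
  exact enorm_sub_rev (f x) (g x)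

lemma wLp_smoothOp_sub_smoothOp_le (A : Adm n p α) (hK : IsKernel n M K) :
    ∃ C : ℝ≥0∞, C ≠ ∞ ∧ ∀ (f : Sp n → ℝ) (_ : MemW n p α f) (a b : ℝ) (_ : 0 < a) (_ : 0 < b),
      wLp n p α (fun x => smoothOp K a f x - smoothOp K b f x) ≤
        C * (modD n p α M f a + modD n p α M f b) := by
  obtain ⟨C, hC, h⟩ := wLp_sub_smoothOp_le A hK
  refine ⟨C, hC, fun f hf a b ha hb => ?_⟩
  have hm := hf.meas
  have h1 := measurable_smoothOp hK.smooth.continuous a hm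
  have h2 := measurable_smoothOp hK.smooth.continuous b hm
  have e : (fun x => smoothOp K a f x - smoothOp K b f x) =
      fun x => (smoothOp K a f x - f x) + (f x - smoothOp K b f x) := by ext; ring
  rw [e]
  refine (wLp_add_le A.hp (by fun_prop) (by fun_prop)).trans ?_
  rw [mul_add, wLp_sub_comm (smoothOp K a f)]
  exact add_le_add (h f hf a ha) (h f hf b hb)

/-- The approximant at scale `t`: the smoothing operator applied twice. -/
def approxOp (K : Sp n → ℝ) (t : ℝ) (f : Sp n → ℝ) : Sp n → ℝ :=
  smoothOp K t (smoothOp K t f)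

lemma wLp_sub_approxOp_le (A : Adm n p α) (hM : 1 ≤ M) (hK : IsKernel n M K) :
    ∃ C : ℝ≥0∞, C ≠ ∞ ∧ ∀ (f : Sp n → ℝ) (_ : MemW n p α f) (t : ℝ) (_ : 0 < t),
      wLp n p α (fun x => f x - approxOp K t f x) ≤ C * modD n p α M f t := by
  obtain ⟨C, hC, h⟩ := wLp_sub_smoothOp_le A hK
  obtain ⟨C', hC', h'⟩ := wLp_smoothOp_le A hM hK
  refine ⟨C + C' * C, by finiteness, fun f hf t ht => ?_⟩
  have hs := hf.smoothOp A hM hK ht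
  have hm := hf.meas
  have h1 := hs.meas
  have h2 := measurable_smoothOp hK.smooth.continuous t h1
  have hd := hf.sub A hs
  have e : (fun x => f x - approxOp K t f x) = fun x => (f x - smoothOp K t f x) +
      smoothOp K t (fun y => f y - smoothOp K t f y) x := by
    ext x
    rw [smoothOp_sub A hK hf hs ht, approxOp]
    ring
  rw [e]
  refine (wLp_add_le A.hp hd.meas
    (measurable_smoothOp hK.smooth.continuous t hd.meas)).trans ?_
  rw [add_mul, mul_assoc]
  refine add_le_add (h f hf t ht) ((h' t ht _ hd.meas).trans ?_)
  gcongr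
  exact h f hf t ht

/-- The difference of two approximants is again smoothed, at either scale, and the function
being smoothed is small in norm. Commutativity of the smoothing operators is essential here. -/
lemma approxOp_sub_approxOp (A : Adm n p α) (hM : 1 ≤ M) (hK : IsKernel n M K) {f : Sp n → ℝ}
    (hf : MemW n p α f) {a b : ℝ} (ha : 0 < a) (hb : 0 < b) (x : Sp n) :
    approxOp K a f x - approxOp K b f x =
      smoothOp K a (fun y => smoothOp K a f y - smoothOp K b f y) x +
      smoothOp K b (fun y => smoothOp K a f y - smoothOp K b f y) x := by
  have h1 := hf.smoothOp A hM hK ha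
  have h2 := hf.smoothOp A hM hK hb
  rw [smoothOp_sub A hK h1 h2 ha, smoothOp_sub A hK h1 h2 hb, approxOp, approxOp,
    smoothOp_comm A hK hf (a := a) hb]
  ring

/-- The product of two smoothed functions, one in `L^p(|x|^α)` and the other bounded, has modulus
of smoothness `O((t / τ)^M)` below the smoothing scale `τ`. -/
lemma modD_smoothOp_mul_le (A : Adm n p α) (hM : 1 ≤ M) (hK : IsKernel n M K) :
    ∃ C : ℝ≥0∞, C ≠ ∞ ∧ ∀ (G H : Sp n → ℝ) (_ : MemW n p α G) (_ : MemW n p α H) (V : ℝ≥0∞)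
      (_ : V ≠ ∞) (_ : ∀ᵐ y, ‖H y‖ₑ ≤ V) (t τ a b : ℝ) (_ : 0 < t) (_ : t ≤ τ) (_ : τ ≤ a)
      (_ : τ ≤ b), modD n p α M (fun x => smoothOp K a G x * smoothOp K b H x) t ≤
        C * ENNReal.ofReal (t / τ) ^ M * V * wLp n p α G := by
  obtain ⟨C, hC, h⟩ := enorm_fwdDiff_smoothOp_le A hK
  obtain ⟨CA, hCA, hA⟩ := wLpE_ballAvg_le A.hn A.hp A.hα0 A.hα (two_mul_pos_of_one_le hM)
  set W := volume (Metric.closedBall (0 : Sp n) (2 * M)) with hWdef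
  have hW : W ≠ ∞ := measure_closedBall_lt_top.ne
  refine ⟨2 ^ M * C * (C * W) * ((M + 1 : ℕ) * (CA * CA)), by finiteness, ?_⟩
  intro G H hG hH V hV hHV t τ a b ht htτ hτa hτb
  have hτ : 0 < τ := ht.trans_le htτ
  have ha : 0 < a := hτ.trans_le hτa
  have hb : 0 < b := hτ.trans_le hτb
  set l := ENNReal.ofReal (t / τ) with hl
  have hlt : l ≠ ∞ := ENNReal.ofReal_ne_top
  have hGm : Measurable (fun y => ‖G y‖ₑ) := by have := hG.meas; fun_prop
  set g := ballAvg n (2 * M) a (fun y => ‖G y‖ₑ) with hg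
  have hgm : Measurable g := measurable_ballAvg _ _ hGm
  set c : ℝ≥0∞ := 2 ^ M * C * (C * W) * l ^ M * V with hc
  have hct : c ≠ ∞ := by rw [hc]; finiteness
  have hstep : ∀ k : Sp n, ‖k‖ ≤ 1 → ∀ d : ℝ, τ ≤ d → ‖t • k‖ ≤ d ∧
      ENNReal.ofReal (‖t • k‖ / d) ≤ l := by
    intro k hk d hd
    have h1 : ‖t • k‖ ≤ t := by
      rw [norm_smul, Real.norm_of_nonneg ht.le]
      exact mul_le_of_le_one_right ht.le hk
    refine ⟨by linarith, ENNReal.ofReal_le_ofReal ?_⟩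
    gcongr
  have hpt : ∀ x, ballMeans n M (fun x => smoothOp K a G x * smoothOp K b H x) t x ≤
      c * ∑ i ∈ Finset.range (M + 1), ballAvg n (2 * M) (i * t) g x := by
    intro x
    rw [ballMeans_eq]
    calc _ ≤ ∫⁻ k in Metric.closedBall (0 : Sp n) 1, c * ∑ i ∈ Finset.range (M + 1),
          g (x + (i * t) • k) := by
          refine setLIntegral_mono' Metric.isClosed_closedBall.measurableSet fun k hk => ?_
          have hk1 : ‖k‖ ≤ 1 := by simpa using hk
          rw [iterDiff_eq]
          refine (enorm_fwdDiff_mul_le l (t • k) M _ _ x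
            (C * ∑ i ∈ Finset.range (M + 1), g (x + (i * t) • k)) (C * (V * W)) ?_ ?_).trans ?_
          · intro r i hri
            obtain ⟨hs1, hs2⟩ := hstep k hk1 a hτa
            refine (h G hG a ha (t • k) hs1 r (by omega) _).trans ?_
            gcongr
            have e : x + i • t • k = x + (i * t) • k := by
              rw [← Nat.cast_smul_eq_nsmul ℝ, smul_smul]
            rw [e]
            exact Finset.single_le_sum (f := fun i : ℕ => g (x + (i * t) • k))
              (fun _ _ => zero_le) (Finset.mem_range.2 (by omega))
          · intro r hr
            obtain ⟨hs1, hs2⟩ := hstep k hk1 b hτb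
            refine (h H hH b hb (t • k) hs1 r hr _).trans ?_
            gcongr
            exact ballAvg_le_of_ae_le hb hHV x
          · refine le_of_eq ?_
            rw [hc]
            ring
      _ = c * ∑ i ∈ Finset.range (M + 1),
          ∫⁻ k in Metric.closedBall (0 : Sp n) 1, g (x + (i * t) • k) := by
          rw [lintegral_const_mul' _ _ hct, lintegral_finsetSum _ fun i _ => by fun_prop]
      _ ≤ _ := by
          gcongr with i _
          exact lintegral_ball_one_le_ballAvg hM g _ x
  refine (wLpE_mono A.p_pos hpt).trans ?_
  rw [wLpE_const_mul A.p_pos hct]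
  calc _ ≤ c * ∑ i ∈ Finset.range (M + 1), wLpE n p α (ballAvg n (2 * M) (i * t) g) := by
        gcongr
        exact wLpE_sum_le A.hp _ (fun (i : ℕ) x => ballAvg n (2 * M) (i * t) g x) fun i =>
          measurable_ballAvg _ _ hgm
    _ ≤ c * ∑ i ∈ Finset.range (M + 1), CA * (CA * wLp n p α G) := by
        gcongr with i _
        refine (hA (i * t) (by positivity) g hgm).trans ?_
        gcongr
        exact hA a ha.le _ hGm
    _ = _ := by
        rw [Finset.sum_const, Finset.card_range, nsmul_eq_mul, hc]
        ring

end modD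

/-! ### Essential boundedness -/

section embedding

variable {n M : ℕ} {p α : ℝ} {K : Sp n → ℝ}

/-- The modulus of smoothness multiplied by the power of the scale that is critical for the
embedding into `L^∞`. -/
def critD (n : ℕ) (p α : ℝ) (M : ℕ) (f : Sp n → ℝ) (t : ℝ) : ℝ≥0∞ :=
  ENNReal.ofReal (t ^ (-((n + α) / p))) * modD n p α M f t

lemma crit_nonneg (A : Adm n p α) : 0 ≤ (n + α) / p :=
  div_nonneg (add_nonneg (by positivity) A.hα0) A.p_pos.le

lemma rpow_neg_half {σ t : ℝ} (ht : 0 < t) : (t / 2) ^ (-σ) = 2 ^ σ * t ^ (-σ) := by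
  rw [Real.div_rpow ht.le (by norm_num), Real.rpow_neg (by norm_num : (0 : ℝ) ≤ 2)]
  field_simp

lemma enorm_smoothOp_le_wLp (A : Adm n p α) (hK : IsKernel n M K) :
    ∃ C : ℝ≥0∞, C ≠ ∞ ∧ ∀ (f : Sp n → ℝ) (_ : Measurable f) (t : ℝ) (_ : 0 < t) (x : Sp n),
      ‖smoothOp K t f x‖ₑ ≤ C * ENNReal.ofReal (t ^ (-((n + α) / p))) * wLp n p α f := by
  obtain ⟨C₁, hC₁, h₁⟩ := enorm_smoothOp_le hK
  obtain ⟨C₂, hC₂, h₂⟩ := ballAvg_le_wLpE A.hn A.hp A.hα0 A.hα (2 * M)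
  refine ⟨C₁ * C₂, by finiteness, fun f hf t ht x => (h₁ t f x).trans ?_⟩
  have := h₂ t ht (fun y => ‖f y‖ₑ) (by fun_prop) x
  calc _ ≤ C₁ * (C₂ * ENNReal.ofReal (t ^ (-((n + α) / p))) * wLp n p α f) := by gcongr; exact this
    _ = _ := by ring

lemma enorm_approxOp_half_sub_le (A : Adm n p α) (hM : 1 ≤ M) (hK : IsKernel n M K) :
    ∃ C : ℝ≥0∞, C ≠ ∞ ∧ ∀ (f : Sp n → ℝ) (_ : MemW n p α f) (t : ℝ) (_ : 0 < t) (x : Sp n),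
      ‖approxOp K (t / 2) f x - approxOp K t f x‖ₑ ≤
        C * (critD n p α M f (t / 2) + critD n p α M f t) := by
  obtain ⟨C₁, hC₁, h₁⟩ := enorm_smoothOp_le_wLp A hK
  obtain ⟨C₃, hC₃, h₃⟩ := wLp_smoothOp_sub_smoothOp_le A hK
  set σ := (n + α) / p with hσ
  have hσ0 : 0 ≤ σ := crit_nonneg A
  refine ⟨2 * C₁ * C₃ * ENNReal.ofReal (2 ^ σ), by finiteness, fun f hf t ht x => ?_⟩
  have ht2 : 0 < t / 2 := by positivity
  rw [approxOp_sub_approxOp A hM hK hf ht2 ht]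
  set w : Sp n → ℝ := fun y => smoothOp K (t / 2) f y - smoothOp K t f y with hw
  have hwm : Measurable w :=
    (measurable_smoothOp hK.smooth.continuous _ hf.meas).sub
      (measurable_smoothOp hK.smooth.continuous _ hf.meas)
  have hmono : ENNReal.ofReal (t ^ (-σ)) ≤ ENNReal.ofReal ((t / 2) ^ (-σ)) :=
    ENNReal.ofReal_le_ofReal (Real.rpow_le_rpow_of_nonpos ht2 (by linarith) (by linarith))
  have hhalf : ENNReal.ofReal ((t / 2) ^ (-σ)) =
      ENNReal.ofReal (2 ^ σ) * ENNReal.ofReal (t ^ (-σ)) := by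
    rw [rpow_neg_half ht, ENNReal.ofReal_mul (by positivity)]
  have hone : 1 ≤ ENNReal.ofReal (2 ^ σ) := by
    rw [← ENNReal.ofReal_one]
    exact ENNReal.ofReal_le_ofReal (Real.one_le_rpow (by norm_num) hσ0)
  calc _ ≤ ‖smoothOp K (t / 2) w x‖ₑ + ‖smoothOp K t w x‖ₑ := enorm_add_le _ _
    _ ≤ C₁ * ENNReal.ofReal ((t / 2) ^ (-σ)) * wLp n p α w +
        C₁ * ENNReal.ofReal ((t / 2) ^ (-σ)) * wLp n p α w := by
      refine add_le_add (h₁ w hwm _ ht2 x) ((h₁ w hwm _ ht x).trans ?_)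
      gcongr
    _ = 2 * C₁ * ENNReal.ofReal ((t / 2) ^ (-σ)) * wLp n p α w := by ring
    _ ≤ 2 * C₁ * ENNReal.ofReal ((t / 2) ^ (-σ)) *
        (C₃ * (modD n p α M f (t / 2) + modD n p α M f t)) := by
      gcongr
      exact h₃ f hf _ _ ht2 ht
    _ = 2 * C₁ * C₃ * (1 * ENNReal.ofReal ((t / 2) ^ (-σ)) * modD n p α M f (t / 2) +
          ENNReal.ofReal ((t / 2) ^ (-σ)) * modD n p α M f t) := by ring
    _ ≤ 2 * C₁ * C₃ * (ENNReal.ofReal (2 ^ σ) * ENNReal.ofReal ((t / 2) ^ (-σ)) *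
          modD n p α M f (t / 2) +
          ENNReal.ofReal (2 ^ σ) * ENNReal.ofReal (t ^ (-σ)) * modD n p α M f t) := by
      rw [← hhalf]
      gcongr
    _ = _ := by
      rw [critD, critD]
      ring

lemma ae_le_of_wLpE_sub_eq_zero (A : Adm n p α) {F : Sp n → ℝ≥0∞} (hF : Measurable F) {R : ℝ≥0∞}
    (h : wLpE n p α (fun x => F x - R) = 0) : ∀ᵐ x, F x ≤ R := by
  have := nontrivial_sp A.hn
  rw [wLpE, ENNReal.rpow_eq_zero_iff_of_pos (one_div_pos.2 A.p_pos),
    lintegral_eq_zero_iff (by fun_prop)] at h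
  have h0 : ∀ᵐ x : Sp n, x ≠ 0 := by
    simp [ae_iff]
  filter_upwards [h, h0] with x hx hx0
  simp only [Pi.zero_apply, mul_eq_zero] at hx
  rcases hx with hx | hx
  · exact tsub_eq_zero_iff_le.1 ((ENNReal.rpow_eq_zero_iff_of_pos A.p_pos).1 hx)
  · exfalso
    rw [ENNReal.rpow_eq_zero_iff] at hx
    rcases hx with ⟨hx, -⟩ | ⟨hx, -⟩
    · simp [hx0] at hx
    · simp at hx

/-- A bound for the approximants passes to the function as soon as the moduli of smoothness tend
to zero along the scales considered. -/
lemma ae_le_of_approxOp_le (A : Adm n p α) (hM : 1 ≤ M) (hK : IsKernel n M K) {f : Sp n → ℝ}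
    (hf : MemW n p α f) {u : ℕ → ℝ} (hu : ∀ k, 0 < u k) {R : ℝ≥0∞}
    (hR : ∀ k x, ‖approxOp K (u k) f x‖ₑ ≤ R)
    (hlim : Tendsto (fun k => modD n p α M f (u k)) atTop (nhds 0)) :
    ∀ᵐ x, ‖f x‖ₑ ≤ R := by
  obtain ⟨C, hC, h⟩ := wLp_sub_approxOp_le A hM hK
  have hm := hf.meas
  refine ae_le_of_wLpE_sub_eq_zero A (F := fun x => ‖f x‖ₑ) (by fun_prop) ?_
  have key : ∀ k, wLpE n p α (fun x => ‖f x‖ₑ - R) ≤ C * modD n p α M f (u k) := fun k => by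
    refine (wLpE_mono A.p_pos fun x => ?_).trans (h f hf (u k) (hu k))
    rw [tsub_le_iff_right]
    calc ‖f x‖ₑ = ‖(f x - approxOp K (u k) f x) + approxOp K (u k) f x‖ₑ := by simp
      _ ≤ _ := (enorm_add_le _ _).trans (add_le_add le_rfl (hR k x))
  have hl : Tendsto (fun k => C * modD n p α M f (u k)) atTop (nhds 0) := by
    simpa using ENNReal.Tendsto.const_mul hlim (Or.inr hC)
  exact le_antisymm (ge_of_tendsto' hl key) (zero_le)

/-- Telescoping over the dyadic scales `2 ^ (-j) * t` bounds the function almost everywhere. -/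
lemma ae_enorm_le_tsum (A : Adm n p α) (hM : 1 ≤ M) :
    ∃ C : ℝ≥0∞, C ≠ ∞ ∧ ∀ (f : Sp n → ℝ) (_ : MemW n p α f) (t : ℝ) (_ : 1 / 2 < t) (_ : t < 1),
      ∀ᵐ x, ‖f x‖ₑ ≤ C * (wLp n p α f + ∑' j : ℕ, critD n p α M f ((2 : ℝ)⁻¹ ^ j * t)) := by
  obtain ⟨K, hK⟩ := exists_kernel n M
  obtain ⟨C₁, hC₁, h₁⟩ := enorm_smoothOp_le_wLp A hK
  obtain ⟨C₂, hC₂, h₂⟩ := wLp_smoothOp_le A hM hK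
  obtain ⟨C₃, hC₃, h₃⟩ := enorm_approxOp_half_sub_le A hM hK
  set σ := (n + α) / p with hσ
  have hσ0 : 0 ≤ σ := crit_nonneg A
  set B : ℝ≥0∞ := C₁ * ENNReal.ofReal ((1 / 2) ^ (-σ)) * C₂ with hB
  have hBt : B ≠ ∞ := by finiteness
  refine ⟨B + 2 * C₃ + 1, by finiteness, fun f hf t ht ht1 => ?_⟩
  have ht0 : 0 < t := by linarith
  set T := ∑' j : ℕ, critD n p α M f ((2 : ℝ)⁻¹ ^ j * t) with hT
  by_cases hTt : T = ∞
  · filter_upwards with x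
    rw [hTt, add_top, ENNReal.mul_top (by simp)]
    exact le_top
  have hpos : ∀ k : ℕ, 0 < (2 : ℝ)⁻¹ ^ k * t := fun k => by positivity
  refine ae_le_of_approxOp_le A hM hK hf hpos (R := _) ?_ ?_
  · intro k x
    have hsum : ‖approxOp K ((2 : ℝ)⁻¹ ^ k * t) f x‖ₑ ≤ ‖approxOp K t f x‖ₑ +
        ∑ j ∈ Finset.range k, C₃ * (critD n p α M f ((2 : ℝ)⁻¹ ^ (j + 1) * t) +
          critD n p α M f ((2 : ℝ)⁻¹ ^ j * t)) := by
      induction k with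
      | zero => simp
      | succ k ih =>
        rw [Finset.sum_range_succ, ← add_assoc]
        have e : (2 : ℝ)⁻¹ ^ (k + 1) * t = ((2 : ℝ)⁻¹ ^ k * t) / 2 := by ring
        have h3 := h₃ f hf _ (hpos k) x
        rw [← e] at h3
        calc _ = ‖approxOp K ((2 : ℝ)⁻¹ ^ k * t) f x + (approxOp K ((2 : ℝ)⁻¹ ^ (k + 1) * t) f x -
              approxOp K ((2 : ℝ)⁻¹ ^ k * t) f x)‖ₑ := by congr 1; ring
          _ ≤ _ := (enorm_add_le _ _).trans (add_le_add ih h3)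
    have h0 : ‖approxOp K t f x‖ₑ ≤ B * wLp n p α f := by
      calc _ ≤ C₁ * ENNReal.ofReal (t ^ (-σ)) * wLp n p α (smoothOp K t f) :=
            h₁ _ (measurable_smoothOp hK.smooth.continuous _ hf.meas) t ht0 x
        _ ≤ C₁ * ENNReal.ofReal ((1 / 2) ^ (-σ)) * (C₂ * wLp n p α f) := by
          gcongr C₁ * ?_ * ?_
          · exact ENNReal.ofReal_le_ofReal
              (Real.rpow_le_rpow_of_nonpos (by norm_num) ht.le (by linarith))
          · exact h₂ t ht0 f hf.meas
        _ = _ := by rw [hB]; ring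
    have hs1 : ∑ j ∈ Finset.range k, critD n p α M f ((2 : ℝ)⁻¹ ^ j * t) ≤ T :=
      ENNReal.sum_le_tsum _
    have hs2 : ∑ j ∈ Finset.range k, critD n p α M f ((2 : ℝ)⁻¹ ^ (j + 1) * t) ≤ T := by
      refine le_trans ?_ (ENNReal.sum_le_tsum (Finset.range (k + 1)))
      rw [Finset.sum_range_succ']
      exact le_self_add
    calc _ ≤ _ := hsum
      _ ≤ B * wLp n p α f + C₃ * (T + T) := by
        rw [← Finset.mul_sum, Finset.sum_add_distrib]
        gcongr
      _ = B * wLp n p α f + 2 * C₃ * T := by ring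
      _ ≤ (B + 2 * C₃ + 1) * wLp n p α f + (B + 2 * C₃ + 1) * T := by
        gcongr
        · rw [add_assoc]
          exact le_self_add
        · rw [add_right_comm]
          exact le_add_self
      _ = _ := by ring
  · have hl := ENNReal.tendsto_atTop_zero_of_tsum_ne_top hTt
    refine tendsto_of_tendsto_of_tendsto_of_le_of_le tendsto_const_nhds hl
      (fun _ => zero_le) fun k => ?_
    have h1 : (1 : ℝ) ≤ ((2 : ℝ)⁻¹ ^ k * t) ^ (-σ) := by
      refine Real.one_le_rpow_of_pos_of_le_one_of_nonpos (hpos k) ?_ (by linarith)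
      have : (2 : ℝ)⁻¹ ^ k ≤ 1 := pow_le_one₀ (by norm_num) (by norm_num)
      nlinarith [hpos k]
    have h2 : 1 ≤ ENNReal.ofReal (((2 : ℝ)⁻¹ ^ k * t) ^ (-σ)) := by
      rw [← ENNReal.ofReal_one]
      exact ENNReal.ofReal_le_ofReal h1
    calc modD n p α M f ((2 : ℝ)⁻¹ ^ k * t) = 1 * modD n p α M f ((2 : ℝ)⁻¹ ^ k * t) := by ring
      _ ≤ _ := by rw [critD]; gcongr

end embedding

/-! ### The integral over the scales -/

section scales

/-- The measure `dt / t` on `(0, 1)`. -/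
def scaleM : Measure ℝ :=
  (volume.restrict (Set.Ioo (0 : ℝ) 1)).withDensity (fun t => ENNReal.ofReal t⁻¹)

/-- The `L^q(dt / t)` norm over `0 < t < 1` of `t ^ (-s) * D t`. For `q = ∞` the supremum is over
all `t`, with no exceptional null set. -/
def besB (s : ℝ) (q : ℝ≥0∞) (D : ℝ → ℝ≥0∞) : ℝ≥0∞ :=
  if q = ∞ then ⨆ t ∈ Set.Ioo (0 : ℝ) 1, ENNReal.ofReal (t ^ (-s)) * D t
  else (∫⁻ t, (ENNReal.ofReal (t ^ (-s)) * D t) ^ q.toReal ∂scaleM) ^ (1 / q.toReal)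

lemma lintegral_scaleM (F : ℝ → ℝ≥0∞) :
    ∫⁻ t, F t ∂scaleM = ∫⁻ t in Set.Ioo (0 : ℝ) 1, F t * ENNReal.ofReal t⁻¹ := by
  rw [scaleM, lintegral_withDensity_eq_lintegral_mul_non_measurable _ (by fun_prop)]
  · exact lintegral_congr fun t => mul_comm _ _
  · exact ae_of_all _ fun t => ENNReal.ofReal_lt_top

lemma ae_scaleM : ∀ᵐ t ∂scaleM, t ∈ Set.Ioo (0 : ℝ) 1 :=
  (withDensity_absolutelyContinuous _ _).ae_le (ae_restrict_mem measurableSet_Ioo)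

lemma besovNorm_eq {n : ℕ} {p α s : ℝ} {q : ℝ≥0∞} {M : ℕ} (f : Sp n → ℝ) :
    besovNorm n p α s q M f = wLp n p α f + besB s q (modD n p α M f) := by
  unfold besovNorm besB
  congr 1
  split_ifs with h
  · rfl
  · rw [lintegral_scaleM]
    congr 1
    refine setLIntegral_congr_fun measurableSet_Ioo fun t ht => ?_
    rw [ENNReal.mul_rpow_of_nonneg _ _ ENNReal.toReal_nonneg,
      ENNReal.ofReal_rpow_of_nonneg (Real.rpow_nonneg ht.1.le _) ENNReal.toReal_nonneg,
      ← Real.rpow_mul ht.1.le, neg_mul]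
    rfl

lemma toReal_one_le {q : ℝ≥0∞} (hq : 1 ≤ q) (h : q ≠ ∞) : 1 ≤ q.toReal := by
  rw [← ENNReal.toReal_one]
  exact ENNReal.toReal_mono h hq

lemma besB_mono {s : ℝ} {q : ℝ≥0∞} {D D' : ℝ → ℝ≥0∞}
    (h : ∀ t ∈ Set.Ioo (0 : ℝ) 1, D t ≤ D' t) : besB s q D ≤ besB s q D' := by
  unfold besB
  split_ifs with hq
  · exact iSup₂_mono fun t ht => by gcongr; exact h t ht
  · refine ENNReal.rpow_le_rpow ?_ (by positivity)
    refine lintegral_mono_ae (ae_scaleM.mono fun t ht => ?_)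
    have := h t ht
    gcongr

lemma besB_add_le {s : ℝ} {q : ℝ≥0∞} (hq : 1 ≤ q) {D D' : ℝ → ℝ≥0∞} (hD : Measurable D)
    (hD' : Measurable D') : besB s q (fun t => D t + D' t) ≤ besB s q D + besB s q D' := by
  unfold besB
  split_ifs with h
  · refine iSup₂_le fun t ht => ?_
    rw [mul_add]
    exact add_le_add (le_iSup₂ (f := fun t _ => ENNReal.ofReal (t ^ (-s)) * D t) t ht)
      (le_iSup₂ (f := fun t _ => ENNReal.ofReal (t ^ (-s)) * D' t) t ht)
  · simp_rw [mul_add]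
    exact ENNReal.lintegral_Lp_add_le (f := fun t => ENNReal.ofReal (t ^ (-s)) * D t)
      (g := fun t => ENNReal.ofReal (t ^ (-s)) * D' t) (by fun_prop) (by fun_prop)
      (toReal_one_le hq h)

lemma besB_const_mul {s : ℝ} {q : ℝ≥0∞} (hq : 1 ≤ q) {c : ℝ≥0∞} (hc : c ≠ ∞) (D : ℝ → ℝ≥0∞) :
    besB s q (fun t => c * D t) = c * besB s q D := by
  unfold besB
  split_ifs with h
  · simp_rw [ENNReal.mul_iSup, mul_left_comm]
  · have h1 := toReal_one_le hq h
    have h0 : 0 < q.toReal := by linarith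
    simp_rw [mul_left_comm _ c, ENNReal.mul_rpow_of_nonneg c _ h0.le]
    rw [lintegral_const_mul' _ _ (by finiteness), ENNReal.mul_rpow_of_nonneg _ _ (by positivity),
      ← ENNReal.rpow_mul, mul_one_div_cancel h0.ne', ENNReal.rpow_one]

lemma iSup_rpow_of_pos {r : ℝ} (hr : 0 < r) (x : ℕ → ℝ≥0∞) : (⨆ i, x i) ^ r = ⨆ i, x i ^ r :=
  (ENNReal.orderIsoRpow r hr).map_iSup x

/-- Minkowski's inequality for series of nonnegative functions. -/
lemma lintegral_Lp_tsum_le {μ : Measure ℝ} {r : ℝ} (hr : 1 ≤ r) {F : ℕ → ℝ → ℝ≥0∞}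
    (hF : ∀ j, Measurable (F j)) :
    (∫⁻ t, (∑' j, F j t) ^ r ∂μ) ^ (1 / r) ≤ ∑' j, (∫⁻ t, F j t ^ r ∂μ) ^ (1 / r) := by
  have h0 : 0 < r := by linarith
  have hfin : ∀ J : ℕ, (∫⁻ t, (∑ j ∈ Finset.range J, F j t) ^ r ∂μ) ^ (1 / r) ≤
      ∑ j ∈ Finset.range J, (∫⁻ t, F j t ^ r ∂μ) ^ (1 / r) := by
    intro J
    induction J with
    | zero => simp [h0]
    | succ J ih =>
      simp_rw [Finset.sum_range_succ]
      exact (ENNReal.lintegral_Lp_add_le (f := fun t => ∑ j ∈ Finset.range J, F j t) (g := F J)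
        (by fun_prop) (by fun_prop) hr).trans (add_le_add ih le_rfl)
  simp_rw [ENNReal.tsum_eq_iSup_nat (f := fun j => F j _), iSup_rpow_of_pos h0]
  rw [lintegral_iSup (by fun_prop), iSup_rpow_of_pos (by positivity)]
  · exact iSup_le fun J => (hfin J).trans (ENNReal.sum_le_tsum _)
  · intro a b hab t
    have : ∑ j ∈ Finset.range a, F j t ≤ ∑ j ∈ Finset.range b, F j t :=
      Finset.sum_le_sum_of_subset (Finset.range_mono hab)
    simp only
    gcongr

lemma besB_tsum_le {s : ℝ} {q : ℝ≥0∞} (hq : 1 ≤ q) {D : ℕ → ℝ → ℝ≥0∞}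
    (hD : ∀ j, Measurable (D j)) :
    besB s q (fun t => ∑' j, D j t) ≤ ∑' j, besB s q (D j) := by
  unfold besB
  split_ifs with h
  · refine iSup₂_le fun t ht => ?_
    rw [← ENNReal.tsum_mul_left]
    exact ENNReal.tsum_le_tsum fun j =>
      le_iSup₂ (f := fun t _ => ENNReal.ofReal (t ^ (-s)) * D j t) t ht
  · simp_rw [← ENNReal.tsum_mul_left]
    exact lintegral_Lp_tsum_le (toReal_one_le hq h)
      (F := fun j t => ENNReal.ofReal (t ^ (-s)) * D j t) fun j => by fun_prop

/-- Invariance of `dt / t` under dilations. -/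
lemma lintegral_dilate {F : ℝ → ℝ≥0∞} (hF : Measurable F) {a b c : ℝ} (hc : 0 < c) :
    ∫⁻ t in Set.Ioo a b, F (c * t) * ENNReal.ofReal t⁻¹ =
      ∫⁻ u in Set.Ioo (c * a) (c * b), F u * ENNReal.ofReal u⁻¹ := by
  rw [← lintegral_indicator measurableSet_Ioo, ← lintegral_indicator measurableSet_Ioo]
  conv_rhs => rw [← Real.smul_map_volume_mul_left hc.ne']
  have hm : Measurable ((Set.Ioo (c * a) (c * b)).indicator
      fun u => F u * ENNReal.ofReal u⁻¹) := Measurable.indicator (by fun_prop) measurableSet_Ioo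
  rw [lintegral_smul_measure, lintegral_map hm (by fun_prop), smul_eq_mul,
    ← lintegral_const_mul _ (by fun_prop)]
  refine lintegral_congr fun t => ?_
  have hiff : t ∈ Set.Ioo a b ↔ c * t ∈ Set.Ioo (c * a) (c * b) := by
    simp [hc]
  by_cases ht : t ∈ Set.Ioo a b
  · rw [Set.indicator_of_mem ht, Set.indicator_of_mem (hiff.1 ht), mul_left_comm,
      ← ENNReal.ofReal_mul (abs_nonneg _), abs_of_pos hc]
    congr 2
    field_simp
  · rw [Set.indicator_of_notMem ht, Set.indicator_of_notMem (hiff.not.1 ht), mul_zero]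

/-- Averaging a dyadic sum over `1 / 2 < t < 1` gives at most the integral over all scales. -/
lemma lintegral_tsum_dyadic_le {F : ℝ → ℝ≥0∞} (hF : Measurable F) :
    ∫⁻ t in Set.Ioo (1 / 2 : ℝ) 1, (∑' j : ℕ, F ((2 : ℝ)⁻¹ ^ j * t)) * ENNReal.ofReal t⁻¹ ≤
      ∫⁻ t, F t ∂scaleM := by
  simp_rw [← ENNReal.tsum_mul_right]
  rw [lintegral_tsum (fun j => by fun_prop), lintegral_scaleM]
  have h1 : ∀ j : ℕ, ∫⁻ t in Set.Ioo (1 / 2 : ℝ) 1, F ((2 : ℝ)⁻¹ ^ j * t) * ENNReal.ofReal t⁻¹ =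
      ∫⁻ u in Set.Ioo ((2 : ℝ)⁻¹ ^ (j + 1)) ((2 : ℝ)⁻¹ ^ j), F u * ENNReal.ofReal u⁻¹ := by
    intro j
    rw [lintegral_dilate hF (by positivity)]
    congr 3
    · ring
    · ring
  simp_rw [h1]
  rw [← lintegral_iUnion (fun j => measurableSet_Ioo)]
  · refine lintegral_mono_set (Set.iUnion_subset fun j => ?_)
    refine Set.Ioo_subset_Ioo (by positivity) (pow_le_one₀ (by norm_num) (by norm_num))
  · have hanti : Antitone fun j : ℕ => (2 : ℝ)⁻¹ ^ j :=
      pow_right_anti₀ (by norm_num) (by norm_num)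
    exact hanti.pairwise_disjoint_on_Ioo_succ

lemma besB_dilate_le {s : ℝ} {q : ℝ≥0∞} (hq : 1 ≤ q) {D : ℝ → ℝ≥0∞} (hD : Measurable D) {c : ℝ}
    (hc : 1 ≤ c) :
    besB s q (fun t => (Set.Iio (1 : ℝ)).indicator D (c * t)) ≤
      ENNReal.ofReal (c ^ s) * besB s q D := by
  have hc0 : 0 < c := by linarith
  have key : ∀ t, 0 < t → ENNReal.ofReal (t ^ (-s)) =
      ENNReal.ofReal (c ^ s) * ENNReal.ofReal ((c * t) ^ (-s)) := by
    intro t ht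
    rw [← ENNReal.ofReal_mul (by positivity), Real.mul_rpow hc0.le ht.le, ← mul_assoc,
      ← Real.rpow_add hc0, add_neg_cancel, Real.rpow_zero, one_mul]
  set E : ℝ → ℝ≥0∞ := fun u => ENNReal.ofReal (u ^ (-s)) * D u with hE
  have hpt : ∀ t, 0 < t → ENNReal.ofReal (t ^ (-s)) * (Set.Iio (1 : ℝ)).indicator D (c * t) =
      ENNReal.ofReal (c ^ s) * (Set.Iio (1 : ℝ)).indicator E (c * t) := by
    intro t ht
    by_cases h : c * t ∈ Set.Iio (1 : ℝ)
    · rw [Set.indicator_of_mem h, Set.indicator_of_mem h, key t ht, mul_assoc]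
    · rw [Set.indicator_of_notMem h, Set.indicator_of_notMem h, mul_zero, mul_zero]
  unfold besB
  split_ifs with h
  · refine iSup₂_le fun t ht => ?_
    rw [hpt t ht.1]
    gcongr
    by_cases h : c * t ∈ Set.Iio (1 : ℝ)
    · rw [Set.indicator_of_mem h]
      exact le_iSup₂ (f := fun t _ => ENNReal.ofReal (t ^ (-s)) * D t) (c * t)
        ⟨mul_pos hc0 ht.1, h⟩
    · rw [Set.indicator_of_notMem h]
      exact zero_le
  · have h1 := toReal_one_le hq h
    set r := q.toReal with hr
    have h0 : 0 < r := by linarith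
    have hEm : Measurable E := by fun_prop
    have h2 : ∫⁻ t, (ENNReal.ofReal (t ^ (-s)) *
        (Set.Iio (1 : ℝ)).indicator D (c * t)) ^ r ∂scaleM =
        ENNReal.ofReal (c ^ s) ^ r * ∫⁻ t, (Set.Iio (1 : ℝ)).indicator E (c * t) ^ r ∂scaleM := by
      rw [← lintegral_const_mul' _ _ (by finiteness)]
      refine lintegral_congr_ae (ae_scaleM.mono fun t ht => ?_)
      simp only
      rw [hpt t ht.1, ENNReal.mul_rpow_of_nonneg _ _ h0.le]
    have h3 : ∫⁻ t, (Set.Iio (1 : ℝ)).indicator E (c * t) ^ r ∂scaleM ≤ ∫⁻ t, E t ^ r ∂scaleM := by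
      rw [lintegral_scaleM, lintegral_scaleM]
      have hG : Measurable (fun u => (Set.Iio (1 : ℝ)).indicator E u ^ r) :=
        (hEm.indicator measurableSet_Iio).pow_const r
      rw [lintegral_dilate hG hc0, ← lintegral_indicator measurableSet_Ioo,
        ← lintegral_indicator measurableSet_Ioo]
      refine lintegral_mono fun u => ?_
      by_cases hu : u ∈ Set.Ioo (0 : ℝ) 1
      · rw [Set.indicator_of_mem hu]
        refine (Set.indicator_le_self _ _ _).trans ?_
        gcongr
        exact Set.indicator_le_self _ _ _
      · rw [Set.indicator_of_notMem hu]
        by_cases hu' : u ∈ Set.Ioo (c * 0) (c * 1)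
        · rw [Set.indicator_of_mem hu', Set.indicator_of_notMem, ENNReal.zero_rpow_of_pos h0,
            zero_mul]
          rw [mul_zero] at hu'
          exact fun h => hu ⟨hu'.1, h⟩
        · rw [Set.indicator_of_notMem hu']
    calc _ ≤ (ENNReal.ofReal (c ^ s) ^ r * ∫⁻ t, E t ^ r ∂scaleM) ^ (1 / r) := by
          rw [h2]
          gcongr
      _ = _ := by
        rw [ENNReal.mul_rpow_of_nonneg _ _ (by positivity), ← ENNReal.rpow_mul,
          mul_one_div_cancel h0.ne', ENNReal.rpow_one]

lemma lintegral_scaleM_rpow_ne_top {r : ℝ} (hr : 0 < r) :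
    ∫⁻ t, ENNReal.ofReal (t ^ r) ∂scaleM ≠ ∞ := by
  rw [lintegral_scaleM]
  have h : IntegrableOn (fun t : ℝ => t ^ (r - 1)) (Set.Ioo 0 1) :=
    (intervalIntegral.integrableOn_Ioo_rpow_iff zero_lt_one).2 (by linarith)
  have h2 := h.2.ne
  refine ne_top_of_le_ne_top h2 (le_of_eq ?_)
  refine setLIntegral_congr_fun measurableSet_Ioo fun t ht => ?_
  simp only
  rw [← ENNReal.ofReal_mul (Real.rpow_nonneg ht.1.le _), Real.enorm_eq_ofReal
    (Real.rpow_nonneg ht.1.le _), Real.rpow_sub_one ht.1.ne', div_eq_mul_inv]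

lemma besB_rpow_ne_top {s r : ℝ} {q : ℝ≥0∞} (hq : 1 ≤ q) (h : s < r) :
    besB s q (fun t => ENNReal.ofReal (t ^ r)) ≠ ∞ := by
  have hpt : ∀ t ∈ Set.Ioo (0 : ℝ) 1, ENNReal.ofReal (t ^ (-s)) * ENNReal.ofReal (t ^ r) =
      ENNReal.ofReal (t ^ (r - s)) := by
    intro t ht
    rw [← ENNReal.ofReal_mul (Real.rpow_nonneg ht.1.le _), ← Real.rpow_add ht.1]
    congr 2
    ring
  unfold besB
  split_ifs with hqt
  · refine ne_top_of_le_ne_top ENNReal.one_ne_top (iSup₂_le fun t ht => ?_)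
    rw [hpt t ht, ← ENNReal.ofReal_one]
    exact ENNReal.ofReal_le_ofReal (Real.rpow_le_one ht.1.le ht.2.le (by linarith))
  · have h1 := toReal_one_le hq hqt
    have h0 : 0 < q.toReal := by linarith
    refine ENNReal.rpow_ne_top_of_nonneg (by positivity) ?_
    refine ne_top_of_le_ne_top (lintegral_scaleM_rpow_ne_top (r := (r - s) * q.toReal)
      (mul_pos (by linarith) h0)) (le_of_eq ?_)
    refine lintegral_congr_ae (ae_scaleM.mono fun t ht => ?_)
    simp only
    rw [hpt t ht, ENNReal.ofReal_rpow_of_nonneg (Real.rpow_nonneg ht.1.le _) h0.le,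
      ← Real.rpow_mul ht.1.le]

/-- The integral that controls the `L^∞` norm is dominated by the Besov seminorm, by Hölder's
inequality when `σ < s`. -/
lemma lintegral_crit_le_besB {σ s : ℝ} {q : ℝ≥0∞} (hq : 1 ≤ q)
    (hs : σ < s ∨ (s = σ ∧ q = 1)) :
    ∃ C : ℝ≥0∞, C ≠ ∞ ∧ ∀ (D : ℝ → ℝ≥0∞) (_ : Measurable D),
      ∫⁻ t, ENNReal.ofReal (t ^ (-σ)) * D t ∂scaleM ≤ C * besB s q D := by
  by_cases hq1 : q = 1
  · refine ⟨1, by simp, fun D hD => ?_⟩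
    have hsσ : σ ≤ s := hs.elim le_of_lt fun h => h.1.ge
    simp only [besB, hq1, ENNReal.one_ne_top, if_false, ENNReal.toReal_one, ENNReal.rpow_one,
      div_one, one_mul]
    refine lintegral_mono_ae (ae_scaleM.mono fun t ht => ?_)
    gcongr ENNReal.ofReal ?_ * _
    exact Real.rpow_le_rpow_of_exponent_ge ht.1 ht.2.le (by linarith)
  have hlt : σ < s := hs.resolve_right fun h => hq1 h.2
  have hpt : ∀ t ∈ Set.Ioo (0 : ℝ) 1, ENNReal.ofReal (t ^ (-σ)) =
      ENNReal.ofReal (t ^ (s - σ)) * ENNReal.ofReal (t ^ (-s)) := by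
    intro t ht
    rw [← ENNReal.ofReal_mul (Real.rpow_nonneg ht.1.le _), ← Real.rpow_add ht.1]
    congr 2
    ring
  by_cases hqt : q = ∞
  · refine ⟨_, lintegral_scaleM_rpow_ne_top (r := s - σ) (by linarith), fun D hD => ?_⟩
    rw [← lintegral_mul_const _ (by fun_prop)]
    refine lintegral_mono_ae (ae_scaleM.mono fun t ht => ?_)
    rw [hpt t ht, mul_assoc, besB, if_pos hqt]
    gcongr
    exact le_iSup₂ (f := fun t _ => ENNReal.ofReal (t ^ (-s)) * D t) t ht
  · have h1 : 1 < q.toReal := by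
      refine lt_of_le_of_ne (toReal_one_le hq hqt) fun h => hq1 ?_
      rw [← ENNReal.ofReal_toReal hqt, ← h, ENNReal.ofReal_one]
    set r := q.toReal with hr
    have hc := Real.HolderConjugate.conjExponent h1
    set r' := r.conjExponent with hr'
    have hr'0 : 0 < r' := hc.symm.pos
    refine ⟨(∫⁻ t, ENNReal.ofReal (t ^ (s - σ)) ^ r' ∂scaleM) ^ (1 / r'), ?_, fun D hD => ?_⟩
    · refine ENNReal.rpow_ne_top_of_nonneg (by positivity) ?_
      refine ne_top_of_le_ne_top (lintegral_scaleM_rpow_ne_top (r := (s - σ) * r')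
        (mul_pos (by linarith) hr'0)) (le_of_eq ?_)
      refine lintegral_congr_ae (ae_scaleM.mono fun t ht => ?_)
      simp only
      rw [ENNReal.ofReal_rpow_of_nonneg (Real.rpow_nonneg ht.1.le _) hr'0.le,
        ← Real.rpow_mul ht.1.le]
    · rw [besB, if_neg hqt]
      refine le_trans (le_of_eq ?_) (ENNReal.lintegral_mul_le_Lp_mul_Lq scaleM hc.symm
        (f := fun t => ENNReal.ofReal (t ^ (s - σ)))
        (g := fun t => ENNReal.ofReal (t ^ (-s)) * D t) (by fun_prop) (by fun_prop))
      refine lintegral_congr_ae (ae_scaleM.mono fun t ht => ?_)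
      simp only [Pi.mul_apply]
      rw [hpt t ht, mul_assoc]

end scales

section embeddingBesov

variable {n M : ℕ} {p α s : ℝ} {q : ℝ≥0∞}

/-- Elements of the Besov space are essentially bounded by a multiple of their norm. -/
lemma ae_enorm_le_besovNorm (A : Adm n p α) (hM : 1 ≤ M) (hq : 1 ≤ q)
    (hs : ((n : ℝ) + α) / p < s ∨ (s = ((n : ℝ) + α) / p ∧ q = 1)) :
    ∃ C : ℝ≥0∞, C ≠ ∞ ∧ ∀ (f : Sp n → ℝ) (_ : MemW n p α f),
      ∀ᵐ x, ‖f x‖ₑ ≤ C * besovNorm n p α s q M f := by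
  obtain ⟨C₀, hC₀, h₀⟩ := ae_enorm_le_tsum (M := M) A hM
  obtain ⟨C₁, hC₁, h₁⟩ := lintegral_crit_le_besB hq hs
  refine ⟨2 * (C₀ * (1 + C₁)), by finiteness, fun f hf => ?_⟩
  set N := essSup (fun x => ‖f x‖ₑ) volume with hN
  set W := wLp n p α f with hW
  have hmD : Measurable (modD n p α M f) := measurable_modD hf.meas
  have hmc : Measurable (critD n p α M f) := by
    unfold critD
    fun_prop
  have hpt : ∀ t ∈ Set.Ioo (1 / 2 : ℝ) 1,
      N ≤ C₀ * (W + ∑' j : ℕ, critD n p α M f ((2 : ℝ)⁻¹ ^ j * t)) :=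
    fun t ht => essSup_le_of_ae_le _ (h₀ f hf t ht.1 ht.2)
  have hvol : volume (Set.Ioo (1 / 2 : ℝ) 1) = 2⁻¹ := by
    rw [Real.volume_Ioo, show (1 - 1 / 2 : ℝ) = 2⁻¹ by norm_num,
      ENNReal.ofReal_inv_of_pos (by norm_num)]
    simp
  have hlow : N * 2⁻¹ ≤ ∫⁻ t in Set.Ioo (1 / 2 : ℝ) 1, N * ENNReal.ofReal t⁻¹ := by
    rw [← hvol, ← setLIntegral_const]
    refine setLIntegral_mono' measurableSet_Ioo fun t ht => ?_
    have h1 : 1 ≤ ENNReal.ofReal t⁻¹ := by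
      rw [← ENNReal.ofReal_one]
      exact ENNReal.ofReal_le_ofReal ((one_le_inv₀ (by linarith [ht.1])).2 ht.2.le)
    calc N = N * 1 := (mul_one N).symm
      _ ≤ _ := by gcongr
  have hwt : ∫⁻ t in Set.Ioo (1 / 2 : ℝ) 1, ENNReal.ofReal t⁻¹ ≤ 1 := by
    calc _ ≤ ∫⁻ t in Set.Ioo (1 / 2 : ℝ) 1, 2 := by
          refine setLIntegral_mono' measurableSet_Ioo fun t ht => ?_
          rw [show (2 : ℝ≥0∞) = ENNReal.ofReal 2 by simp]
          refine ENNReal.ofReal_le_ofReal (inv_le_of_inv_le₀ (by norm_num) ?_)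
          linarith [ht.1]
      _ = 1 := by
        rw [setLIntegral_const, hvol]
        exact ENNReal.mul_inv_cancel (by norm_num) (by norm_num)
  have hup : ∫⁻ t in Set.Ioo (1 / 2 : ℝ) 1, N * ENNReal.ofReal t⁻¹ ≤
      C₀ * (W + C₁ * besB s q (modD n p α M f)) := by
    calc _ ≤ ∫⁻ t in Set.Ioo (1 / 2 : ℝ) 1, C₀ * (W * ENNReal.ofReal t⁻¹ +
            (∑' j : ℕ, critD n p α M f ((2 : ℝ)⁻¹ ^ j * t)) * ENNReal.ofReal t⁻¹) := by
          refine setLIntegral_mono' measurableSet_Ioo fun t ht => ?_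
          rw [← add_mul, ← mul_assoc]
          gcongr
          exact hpt t ht
      _ = C₀ * (W * (∫⁻ t in Set.Ioo (1 / 2 : ℝ) 1, ENNReal.ofReal t⁻¹) +
            ∫⁻ t in Set.Ioo (1 / 2 : ℝ) 1,
              (∑' j : ℕ, critD n p α M f ((2 : ℝ)⁻¹ ^ j * t)) * ENNReal.ofReal t⁻¹) := by
          rw [lintegral_const_mul' _ _ hC₀, lintegral_add_left (by fun_prop),
            lintegral_const_mul _ (by fun_prop)]
      _ ≤ C₀ * (W * 1 + C₁ * besB s q (modD n p α M f)) := by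
          gcongr
          exact (lintegral_tsum_dyadic_le hmc).trans (h₁ _ hmD)
      _ = _ := by rw [mul_one]
  have hNle : N ≤ 2 * (C₀ * (1 + C₁)) * besovNorm n p α s q M f := by
    rw [besovNorm_eq]
    calc N = 2 * (N * 2⁻¹) := by
          rw [mul_left_comm, ENNReal.mul_inv_cancel (by norm_num) (by norm_num), mul_one]
      _ ≤ 2 * (C₀ * (W + C₁ * besB s q (modD n p α M f))) := by
          gcongr 2 * ?_
          exact hlow.trans hup
      _ ≤ 2 * (C₀ * ((1 + C₁) * W + (1 + C₁) * besB s q (modD n p α M f))) := by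
          gcongr
          · calc W = 1 * W := (one_mul W).symm
              _ ≤ _ := by gcongr; exact le_self_add
          · exact le_add_self
      _ = _ := by ring
  filter_upwards [ENNReal.ae_le_essSup (fun x => ‖f x‖ₑ)] with x hx
  exact hx.trans hNle

end embeddingBesov

/-! ### The modulus of smoothness of a product -/

section product

variable {n M : ℕ} {p α : ℝ} {K : Sp n → ℝ}

lemma measurable_approxOp (hK : IsKernel n M K) (t : ℝ) {f : Sp n → ℝ} (hf : Measurable f) :
    Measurable (approxOp K t f) :=
  measurable_smoothOp hK.smooth.continuous _ (measurable_smoothOp hK.smooth.continuous _ hf)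

lemma wLp_mul_le (A : Adm n p α) {f g : Sp n → ℝ} {V : ℝ≥0∞} (hV : V ≠ ∞)
    (hg : ∀ᵐ x, ‖g x‖ₑ ≤ V) : wLp n p α (fun x => f x * g x) ≤ V * wLp n p α f := by
  unfold wLp
  rw [← wLpE_const_mul A.p_pos hV]
  refine wLpE_mono_ae A.p_pos (hg.mono fun x hx => ?_)
  change ‖f x * g x‖ₑ ≤ V * ‖f x‖ₑ
  rw [enorm_mul, mul_comm]
  gcongr

/-- The pieces of the paraproduct: the difference of two consecutive approximants of `F` times an
approximant of the bounded function `G`. -/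
lemma modD_paraproduct_le (A : Adm n p α) (hM : 1 ≤ M) (hK : IsKernel n M K) :
    ∃ C : ℝ≥0∞, C ≠ ∞ ∧ ∀ (F G : Sp n → ℝ) (_ : MemW n p α F) (_ : MemW n p α G) (V : ℝ≥0∞)
      (_ : V ≠ ∞) (_ : ∀ᵐ y, ‖G y‖ₑ ≤ V) (t τ c : ℝ) (_ : 0 < t) (_ : t ≤ τ) (_ : τ ≤ c),
      modD n p α M (fun x => (approxOp K τ F x - approxOp K (2 * τ) F x) * approxOp K c G x) t ≤
        C * ENNReal.ofReal (t / τ) ^ M * V *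
          (modD n p α M F τ + modD n p α M F (2 * τ)) := by
  obtain ⟨C₁, hC₁, h₁⟩ := modD_smoothOp_mul_le A hM hK
  obtain ⟨C₂, hC₂, h₂⟩ := enorm_smoothOp_le_of_ae_le hK
  obtain ⟨C₃, hC₃, h₃⟩ := wLp_smoothOp_sub_smoothOp_le A hK
  refine ⟨2 * C₁ * C₂ * C₃, by finiteness, ?_⟩
  intro F G hF hG V hV hGV t τ c ht htτ hτc
  have hτ : 0 < τ := ht.trans_le htτ
  have h2τ : 0 < 2 * τ := by positivity
  have hc : 0 < c := hτ.trans_le hτc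
  set w : Sp n → ℝ := fun y => smoothOp K τ F y - smoothOp K (2 * τ) F y with hw
  have hwW : MemW n p α w := (hF.smoothOp A hM hK hτ).sub A (hF.smoothOp A hM hK h2τ)
  have hSG := hG.smoothOp A hM hK hc
  have hb : ∀ᵐ y, ‖smoothOp K c G y‖ₑ ≤ C₂ * V := ae_of_all _ (h₂ c hc G V hGV)
  have hVt : C₂ * V ≠ ∞ := by finiteness
  have e : (fun x => (approxOp K τ F x - approxOp K (2 * τ) F x) * approxOp K c G x) =
      fun x => smoothOp K τ w x * smoothOp K c (smoothOp K c G) x +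
        smoothOp K (2 * τ) w x * smoothOp K c (smoothOp K c G) x := by
    ext x
    rw [approxOp_sub_approxOp A hM hK hF hτ h2τ, ← add_mul]
    rfl
  have m1 := measurable_smoothOp hK.smooth.continuous τ hwW.meas
  have m2 := measurable_smoothOp hK.smooth.continuous (2 * τ) hwW.meas
  have m3 := measurable_smoothOp hK.smooth.continuous c hSG.meas
  rw [e]
  calc _ ≤ _ := modD_add_le A.hp (m1.mul m3) (m2.mul m3) t
    _ ≤ C₁ * ENNReal.ofReal (t / τ) ^ M * (C₂ * V) * wLp n p α w +
        C₁ * ENNReal.ofReal (t / τ) ^ M * (C₂ * V) * wLp n p α w :=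
      add_le_add (h₁ w _ hwW hSG _ hVt hb t τ τ c ht htτ le_rfl hτc)
        (h₁ w _ hwW hSG _ hVt hb t τ (2 * τ) c ht htτ (by linarith) hτc)
    _ = 2 * C₁ * C₂ * ENNReal.ofReal (t / τ) ^ M * V * wLp n p α w := by ring
    _ ≤ 2 * C₁ * C₂ * ENNReal.ofReal (t / τ) ^ M * V *
        (C₃ * (modD n p α M F τ + modD n p α M F (2 * τ))) := by
      gcongr
      exact h₃ F hF _ _ hτ h2τ
    _ = _ := by ring

/-- The bound for the modulus of smoothness of a product, per unit of the sup norm of the other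
factor: the moduli at the scales `2 ^ j * t`, `j ≤ J`, with weights `2 ^ (-j * M)`, plus a
remainder at the largest scale. -/
def prodBound (n : ℕ) (p α : ℝ) (M : ℕ) (f : Sp n → ℝ) (t : ℝ) (J : ℕ) : ℝ≥0∞ :=
  ∑ j ∈ Finset.range (J + 1), ENNReal.ofReal ((2 : ℝ)⁻¹ ^ j) ^ M * modD n p α M f (2 ^ j * t) +
    ENNReal.ofReal ((2 : ℝ)⁻¹ ^ J) ^ M * wLp n p α f

lemma sum_consecutive_le (f : Sp n → ℝ) (t : ℝ) (J : ℕ) :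
    ∑ j ∈ Finset.range J, ENNReal.ofReal ((2 : ℝ)⁻¹ ^ j) ^ M *
      (modD n p α M f (2 ^ j * t) + modD n p α M f (2 ^ (j + 1) * t)) ≤
    (1 + 2 ^ M) * prodBound n p α M f t J := by
  set S := ∑ j ∈ Finset.range (J + 1),
    ENNReal.ofReal ((2 : ℝ)⁻¹ ^ j) ^ M * modD n p α M f (2 ^ j * t) with hS
  have e : ∀ j : ℕ, ENNReal.ofReal ((2 : ℝ)⁻¹ ^ j) ^ M =
      2 ^ M * ENNReal.ofReal ((2 : ℝ)⁻¹ ^ (j + 1)) ^ M := by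
    intro j
    rw [← mul_pow]
    congr 1
    rw [show (2 : ℝ≥0∞) = ENNReal.ofReal 2 by simp, ← ENNReal.ofReal_mul (by norm_num), pow_succ]
    congr 1
    ring
  have h1 : ∑ j ∈ Finset.range J,
      ENNReal.ofReal ((2 : ℝ)⁻¹ ^ j) ^ M * modD n p α M f (2 ^ j * t) ≤ S :=
    Finset.sum_le_sum_of_subset (Finset.range_mono (Nat.le_succ J))
  have h2 : ∑ j ∈ Finset.range J,
      ENNReal.ofReal ((2 : ℝ)⁻¹ ^ (j + 1)) ^ M * modD n p α M f (2 ^ (j + 1) * t) ≤ S := by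
    rw [hS, Finset.sum_range_succ']
    exact le_self_add
  calc _ = ∑ j ∈ Finset.range J,
        ENNReal.ofReal ((2 : ℝ)⁻¹ ^ j) ^ M * modD n p α M f (2 ^ j * t) +
        2 ^ M * ∑ j ∈ Finset.range J,
          ENNReal.ofReal ((2 : ℝ)⁻¹ ^ (j + 1)) ^ M * modD n p α M f (2 ^ (j + 1) * t) := by
        rw [Finset.mul_sum, ← Finset.sum_add_distrib]
        refine Finset.sum_congr rfl fun j _ => ?_
        rw [← mul_assoc, ← e, mul_add]
    _ ≤ S + 2 ^ M * S := by gcongr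
    _ = (1 + 2 ^ M) * S := by ring
    _ ≤ _ := by
      gcongr
      exact le_self_add

lemma modD_le_prodBound (f : Sp n → ℝ) (t : ℝ) (J : ℕ) :
    modD n p α M f t ≤ prodBound n p α M f t J := by
  refine le_trans ?_ le_self_add
  rw [Finset.sum_range_succ']
  refine le_trans ?_ le_add_self
  simp

/-- Telescoping the products `P_j f * P_j g` of the approximants at the scales `2 ^ j * t`. -/
lemma mul_eq_telescope (K : Sp n → ℝ) (f g : Sp n → ℝ) (t : ℝ) (J : ℕ) (x : Sp n) :
    f x * g x = (f x - approxOp K t f x) * g x + (g x - approxOp K t g x) * approxOp K t f x +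
      ∑ j ∈ Finset.range J,
        ((approxOp K (2 ^ j * t) f x - approxOp K (2 * (2 ^ j * t)) f x) *
            approxOp K (2 ^ j * t) g x +
          (approxOp K (2 ^ j * t) g x - approxOp K (2 * (2 ^ j * t)) g x) *
            approxOp K (2 * (2 ^ j * t)) f x) +
      approxOp K (2 ^ J * t) f x * approxOp K (2 ^ J * t) g x := by
  induction J with
  | zero => simp; ring
  | succ J ih =>
    rw [ih, Finset.sum_range_succ]
    have e : (2 : ℝ) ^ (J + 1) * t = 2 * (2 ^ J * t) := by ring
    rw [e]
    ring

/-- The paraproduct estimate: modulus of smoothness of a product of essentially bounded functions,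
with `J` dyadic steps above the scale `t`. -/
lemma modD_mul_le (A : Adm n p α) (hM : 1 ≤ M) :
    ∃ C : ℝ≥0∞, C ≠ ∞ ∧ ∀ (f g : Sp n → ℝ) (_ : MemW n p α f) (_ : MemW n p α g) (Nf Ng : ℝ≥0∞)
      (_ : Nf ≠ ∞) (_ : Ng ≠ ∞) (_ : ∀ᵐ y, ‖f y‖ₑ ≤ Nf) (_ : ∀ᵐ y, ‖g y‖ₑ ≤ Ng) (t : ℝ) (_ : 0 < t)
      (J : ℕ), modD n p α M (fun x => f x * g x) t ≤
        C * (Ng * prodBound n p α M f t J + Nf * prodBound n p α M g t J) := by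
  obtain ⟨K, hK⟩ := exists_kernel n M
  obtain ⟨C₁, hC₁, h₁⟩ := modD_le_wLp (M := M) A hM
  obtain ⟨C₂, hC₂, h₂⟩ := wLp_sub_approxOp_le A hM hK
  obtain ⟨C₃, hC₃, h₃⟩ := enorm_smoothOp_le_of_ae_le hK
  obtain ⟨C₄, hC₄, h₄⟩ := modD_paraproduct_le A hM hK
  obtain ⟨C₅, hC₅, h₅⟩ := modD_smoothOp_mul_le A hM hK
  obtain ⟨C₆, hC₆, h₆⟩ := wLp_smoothOp_le A hM hK
  refine ⟨C₁ * C₂ * (1 + C₃ * C₃) + C₄ * (1 + 2 ^ M) + C₅ * C₃ * C₆, by finiteness, ?_⟩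
  intro f g hf hg Nf Ng hNf hNg hfN hgN t ht J
  have hmf := hf.meas
  have hmg := hg.meas
  have mP : ∀ r, Measurable (approxOp K r f) := fun r => measurable_approxOp hK r hmf
  have mQ : ∀ r, Measurable (approxOp K r g) := fun r => measurable_approxOp hK r hmg
  have hrat : ∀ j : ℕ, t / (2 ^ j * t) = (2 : ℝ)⁻¹ ^ j := fun j => by
    rw [inv_pow]
    field_simp
  have hge : ∀ j : ℕ, t ≤ 2 ^ j * t := fun j => by
    have : (1 : ℝ) ≤ 2 ^ j := one_le_pow₀ (by norm_num)
    nlinarith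
  set Φ := prodBound n p α M f t J with hΦ
  set Ψ := prodBound n p α M g t J with hΨ
  have b1 : modD n p α M (fun x => (f x - approxOp K t f x) * g x) t ≤ C₁ * C₂ * (Ng * Φ) := by
    calc _ ≤ C₁ * wLp n p α (fun x => (f x - approxOp K t f x) * g x) :=
          h₁ _ ((hmf.sub (mP t)).mul hmg) t ht.le
      _ ≤ C₁ * (Ng * (C₂ * Φ)) := by
          gcongr
          refine (wLp_mul_le A hNg hgN).trans ?_
          gcongr
          refine (h₂ f hf t ht).trans ?_
          gcongr
          exact modD_le_prodBound f t J
      _ = _ := by ring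
  have b2 : modD n p α M (fun x => (g x - approxOp K t g x) * approxOp K t f x) t ≤
      C₁ * C₂ * (C₃ * C₃) * (Nf * Ψ) := by
    have hP : ∀ᵐ x, ‖approxOp K t f x‖ₑ ≤ C₃ * (C₃ * Nf) :=
      ae_of_all _ (h₃ t ht _ _ (ae_of_all _ (h₃ t ht f Nf hfN)))
    calc _ ≤ C₁ * wLp n p α (fun x => (g x - approxOp K t g x) * approxOp K t f x) :=
          h₁ _ ((hmg.sub (mQ t)).mul (mP t)) t ht.le
      _ ≤ C₁ * (C₃ * (C₃ * Nf) * (C₂ * Ψ)) := by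
          gcongr
          refine (wLp_mul_le A (by finiteness) hP).trans ?_
          gcongr
          refine (h₂ g hg t ht).trans ?_
          gcongr
          exact modD_le_prodBound g t J
      _ = _ := by ring
  have b3 : modD n p α M (fun x => ∑ j ∈ Finset.range J,
        ((approxOp K (2 ^ j * t) f x - approxOp K (2 * (2 ^ j * t)) f x) *
            approxOp K (2 ^ j * t) g x +
          (approxOp K (2 ^ j * t) g x - approxOp K (2 * (2 ^ j * t)) g x) *
            approxOp K (2 * (2 ^ j * t)) f x)) t ≤
      C₄ * (1 + 2 ^ M) * (Ng * Φ + Nf * Ψ) := by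
    have mm1 : ∀ j : ℕ, Measurable fun x =>
        (approxOp K (2 ^ j * t) f x - approxOp K (2 * (2 ^ j * t)) f x) *
            approxOp K (2 ^ j * t) g x := fun j => ((mP _).sub (mP _)).mul (mQ _)
    have mm2 : ∀ j : ℕ, Measurable fun x =>
        (approxOp K (2 ^ j * t) g x - approxOp K (2 * (2 ^ j * t)) g x) *
            approxOp K (2 * (2 ^ j * t)) f x := fun j => ((mQ _).sub (mQ _)).mul (mP _)
    refine (modD_sum_le A.hp _ _ (fun j => (mm1 j).add (mm2 j)) t).trans ?_
    calc _ ≤ ∑ j ∈ Finset.range J,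
          (C₄ * Ng * (ENNReal.ofReal ((2 : ℝ)⁻¹ ^ j) ^ M *
            (modD n p α M f (2 ^ j * t) + modD n p α M f (2 ^ (j + 1) * t))) +
          C₄ * Nf * (ENNReal.ofReal ((2 : ℝ)⁻¹ ^ j) ^ M *
            (modD n p α M g (2 ^ j * t) + modD n p α M g (2 ^ (j + 1) * t)))) := by
          refine Finset.sum_le_sum fun j _ => (modD_add_le A.hp (mm1 j) (mm2 j) t).trans ?_
          have e : (2 : ℝ) ^ (j + 1) * t = 2 * (2 ^ j * t) := by ring
          have hpos : (0 : ℝ) < 2 ^ j * t := by positivity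
          have i1 := h₄ f g hf hg Ng hNg hgN t (2 ^ j * t) (2 ^ j * t) ht (hge j) le_rfl
          have i2 := h₄ g f hg hf Nf hNf hfN t (2 ^ j * t) (2 * (2 ^ j * t)) ht (hge j)
            (by linarith)
          rw [hrat] at i1 i2
          rw [e]
          refine add_le_add (i1.trans (le_of_eq ?_)) (i2.trans (le_of_eq ?_)) <;> ring
      _ ≤ C₄ * Ng * ((1 + 2 ^ M) * Φ) + C₄ * Nf * ((1 + 2 ^ M) * Ψ) := by
          rw [Finset.sum_add_distrib, ← Finset.mul_sum, ← Finset.mul_sum]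
          gcongr
          · exact sum_consecutive_le f t J
          · exact sum_consecutive_le g t J
      _ = _ := by ring
  have b4 : modD n p α M (fun x => approxOp K (2 ^ J * t) f x * approxOp K (2 ^ J * t) g x) t ≤
      C₅ * C₃ * C₆ * (Ng * Φ) := by
    have hJ : (0 : ℝ) < 2 ^ J * t := by positivity
    have := h₅ _ _ (hf.smoothOp A hM hK hJ) (hg.smoothOp A hM hK hJ) (C₃ * Ng) (by finiteness)
      (ae_of_all _ (h₃ _ hJ g Ng hgN)) t (2 ^ J * t) _ _ ht (hge J) le_rfl le_rfl
    rw [hrat] at this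
    calc _ ≤ _ := this
      _ ≤ C₅ * ENNReal.ofReal ((2 : ℝ)⁻¹ ^ J) ^ M * (C₃ * Ng) * (C₆ * wLp n p α f) := by
          gcongr
          exact h₆ _ hJ f hmf
      _ = C₅ * C₃ * C₆ * (Ng * (ENNReal.ofReal ((2 : ℝ)⁻¹ ^ J) ^ M * wLp n p α f)) := by ring
      _ ≤ _ := by
          gcongr
          exact le_add_self
  have e : (fun x => f x * g x) = _ := funext fun x => mul_eq_telescope K f g t J x
  have m1 : Measurable fun x => (f x - approxOp K t f x) * g x := (hmf.sub (mP t)).mul hmg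
  have m2 : Measurable fun x => (g x - approxOp K t g x) * approxOp K t f x :=
    (hmg.sub (mQ t)).mul (mP t)
  have m3 : Measurable fun x => ∑ j ∈ Finset.range J,
        ((approxOp K (2 ^ j * t) f x - approxOp K (2 * (2 ^ j * t)) f x) *
            approxOp K (2 ^ j * t) g x +
          (approxOp K (2 ^ j * t) g x - approxOp K (2 * (2 ^ j * t)) g x) *
            approxOp K (2 * (2 ^ j * t)) f x) := by
    refine Finset.measurable_fun_sum _ fun j _ => ?_
    exact (((mP _).sub (mP _)).mul (mQ _)).add (((mQ _).sub (mQ _)).mul (mP _))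
  have m4 : Measurable fun x => approxOp K (2 ^ J * t) f x * approxOp K (2 ^ J * t) g x :=
    (mP _).mul (mQ _)
  rw [e]
  calc _ ≤ C₁ * C₂ * (Ng * Φ) + C₁ * C₂ * (C₃ * C₃) * (Nf * Ψ) +
        C₄ * (1 + 2 ^ M) * (Ng * Φ + Nf * Ψ) + C₅ * C₃ * C₆ * (Ng * Φ) :=
      (modD_add_le A.hp ((m1.add m2).add m3) m4 t).trans (add_le_add
        ((modD_add_le A.hp (m1.add m2) m3 t).trans (add_le_add
          ((modD_add_le A.hp m1 m2 t).trans (add_le_add b1 b2)) b3)) b4)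
    _ ≤ C₁ * C₂ * (Ng * Φ) + C₁ * C₂ * (C₃ * C₃) * (Nf * Ψ) +
        C₄ * (1 + 2 ^ M) * (Ng * Φ + Nf * Ψ) + C₅ * C₃ * C₆ * (Ng * Φ) +
        (C₁ * C₂ * (Nf * Ψ) + C₁ * C₂ * (C₃ * C₃) * (Ng * Φ) + C₅ * C₃ * C₆ * (Nf * Ψ)) :=
      le_self_add
    _ = _ := by ring

end product

section besovProduct

variable {n M : ℕ} {p α s : ℝ} {q : ℝ≥0∞}

/-- The sum of the weighted dilates of a modulus `D` to all dyadic scales below `1`. -/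
def dyadicSum (M : ℕ) (D : ℝ → ℝ≥0∞) (t : ℝ) : ℝ≥0∞ :=
  ∑' j : ℕ, ENNReal.ofReal ((2 : ℝ)⁻¹ ^ j) ^ M * (Set.Iio (1 : ℝ)).indicator D (2 ^ j * t)

lemma measurable_dyadicSum {D : ℝ → ℝ≥0∞} (hD : Measurable D) : Measurable (dyadicSum M D) := by
  unfold dyadicSum
  refine Measurable.tsum fun j => Measurable.const_mul ?_ _
  exact (hD.indicator measurableSet_Iio).comp (by fun_prop)

/-- Since `s < M`, the dilates contribute a convergent geometric series. -/
lemma besB_dyadicSum_le (hq : 1 ≤ q) (hsM : s < M) :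
    ∃ C : ℝ≥0∞, C ≠ ∞ ∧ ∀ (D : ℝ → ℝ≥0∞) (_ : Measurable D),
      besB s q (dyadicSum M D) ≤ C * besB s q D := by
  have hr : (2 : ℝ) ^ (s - M) < 1 := Real.rpow_lt_one_of_one_lt_of_neg (by norm_num) (by linarith)
  refine ⟨∑' j : ℕ, ENNReal.ofReal (2 ^ (s - M)) ^ j, ?_, fun D hD => ?_⟩
  · rw [ENNReal.tsum_geometric]
    refine ENNReal.inv_ne_top.2 (tsub_pos_of_lt ?_).ne'
    rw [← ENNReal.ofReal_one]
    exact (ENNReal.ofReal_lt_ofReal_iff one_pos).2 hr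
  · rw [← ENNReal.tsum_mul_right]
    have hDj : ∀ j : ℕ, Measurable fun t : ℝ => (Set.Iio (1 : ℝ)).indicator D (2 ^ j * t) :=
      fun j => (hD.indicator measurableSet_Iio).comp (by fun_prop)
    refine (besB_tsum_le hq fun j => (hDj j).const_mul _).trans (ENNReal.tsum_le_tsum fun j => ?_)
    rw [besB_const_mul hq (by finiteness)]
    have h1 : (1 : ℝ) ≤ 2 ^ j := one_le_pow₀ (by norm_num)
    calc _ ≤ ENNReal.ofReal ((2 : ℝ)⁻¹ ^ j) ^ M *
          (ENNReal.ofReal ((2 ^ j : ℝ) ^ s) * besB s q D) := by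
          gcongr
          exact besB_dilate_le hq hD h1
      _ = _ := by
          rw [← mul_assoc, ← ENNReal.ofReal_pow (by positivity), ← ENNReal.ofReal_pow (by positivity),
            ← ENNReal.ofReal_mul (by positivity)]
          congr 2
          have e1 : ((2 : ℝ) ^ j) ^ s = ((2 : ℝ) ^ s) ^ j := by
            rw [← Real.rpow_natCast, ← Real.rpow_natCast, ← Real.rpow_mul (by norm_num),
              ← Real.rpow_mul (by norm_num), mul_comm]
          rw [e1, Real.rpow_sub (by norm_num), Real.rpow_natCast, div_pow, inv_pow, inv_pow,
            pow_right_comm]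
          field_simp

/-- The index `J` produced here is the last one with `2 ^ J * t < 1`. -/
lemma exists_prodBound_le {t : ℝ} (ht : t ∈ Set.Ioo (0 : ℝ) 1) :
    ∃ J : ℕ, ∀ f : Sp n → ℝ, prodBound n p α M f t J ≤
      dyadicSum M (modD n p α M f) t + 2 ^ M * wLp n p α f * ENNReal.ofReal (t ^ (M : ℝ)) := by
  have hex : ∃ k : ℕ, 1 ≤ 2 ^ k * t := by
    obtain ⟨k, hk⟩ := pow_unbounded_of_one_lt t⁻¹ (by norm_num : (1 : ℝ) < 2)
    refine ⟨k, ?_⟩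
    rw [inv_lt_iff_one_lt_mul₀ ht.1] at hk
    linarith
  classical
  obtain ⟨J, hJ⟩ : ∃ J, Nat.find hex = J + 1 := by
    refine Nat.exists_eq_succ_of_ne_zero fun h => ?_
    have := Nat.find_spec hex
    rw [h, pow_zero, one_mul] at this
    exact absurd ht.2 (not_lt.2 this)
  have hJ1 : 1 ≤ 2 ^ (J + 1) * t := hJ ▸ Nat.find_spec hex
  have hJ2 : 2 ^ J * t < 1 := not_le.1 (Nat.find_min hex (by omega))
  refine ⟨J, fun f => ?_⟩
  unfold prodBound
  gcongr ?_ + ?_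
  · refine le_trans (Finset.sum_le_sum fun j hj => ?_) (ENNReal.sum_le_tsum (Finset.range (J + 1)))
    rw [Set.indicator_of_mem]
    have h : (2 : ℝ) ^ j ≤ 2 ^ J := pow_le_pow_right₀ (by norm_num) (by
      have := Finset.mem_range.1 hj
      omega)
    have : 2 ^ j * t ≤ 2 ^ J * t := mul_le_mul_of_nonneg_right h ht.1.le
    exact this.trans_lt hJ2
  · have h1 : (2 : ℝ)⁻¹ ^ J ≤ 2 * t := by
      rw [inv_pow, inv_le_iff_one_le_mul₀ (by positivity)]
      calc (1 : ℝ) ≤ 2 ^ (J + 1) * t := hJ1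
        _ = _ := by ring
    calc _ ≤ ENNReal.ofReal (2 * t) ^ M * wLp n p α f := by gcongr
      _ = _ := by
        rw [ENNReal.ofReal_mul (by norm_num), mul_pow, Real.rpow_natCast,
          ENNReal.ofReal_pow ht.1.le]
        simp only [ENNReal.ofReal_ofNat]
        ring

lemma besB_modD_mul_le (A : Adm n p α) (hM : 1 ≤ M) (hq : 1 ≤ q) (hsM : s < M) :
    ∃ C : ℝ≥0∞, C ≠ ∞ ∧ ∀ (f g : Sp n → ℝ) (_ : MemW n p α f) (_ : MemW n p α g) (Nf Ng : ℝ≥0∞)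
      (_ : Nf ≠ ∞) (_ : Ng ≠ ∞) (_ : ∀ᵐ y, ‖f y‖ₑ ≤ Nf) (_ : ∀ᵐ y, ‖g y‖ₑ ≤ Ng),
      besB s q (modD n p α M (fun x => f x * g x)) ≤
        C * (Ng * besovNorm n p α s q M f + Nf * besovNorm n p α s q M g) := by
  obtain ⟨C₁, hC₁, h₁⟩ := modD_mul_le (M := M) A hM
  obtain ⟨C₂, hC₂, h₂⟩ := besB_dyadicSum_le (M := M) hq hsM
  set B := besB s q (fun t => ENNReal.ofReal (t ^ (M : ℝ))) with hB
  have hBt : B ≠ ∞ := besB_rpow_ne_top hq hsM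
  refine ⟨C₁ * (C₂ + 2 ^ M * B), by finiteness, ?_⟩
  intro f g hf hg Nf Ng hNf hNg hfN hgN
  -- the majorant of `prodBound` that depends on the scale only
  set H : (Sp n → ℝ) → ℝ → ℝ≥0∞ := fun f t =>
    dyadicSum M (modD n p α M f) t + 2 ^ M * wLp n p α f * ENNReal.ofReal (t ^ (M : ℝ)) with hH
  have hHm : ∀ f : Sp n → ℝ, Measurable f → Measurable (H f) := fun f hf =>
    (measurable_dyadicSum (measurable_modD hf)).add (by fun_prop)
  have hHB : ∀ f : Sp n → ℝ, MemW n p α f →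
      besB s q (H f) ≤ (C₂ + 2 ^ M * B) * besovNorm n p α s q M f := by
    intro f hf
    have hfin := hf.fin
    have hmD : Measurable (modD n p α M f) := measurable_modD hf.meas
    calc _ ≤ _ := besB_add_le hq (measurable_dyadicSum hmD) (by fun_prop)
      _ ≤ C₂ * besB s q (modD n p α M f) + 2 ^ M * wLp n p α f * B := by
        rw [besB_const_mul hq (by finiteness)]
        gcongr
        exact h₂ _ hmD
      _ ≤ C₂ * besB s q (modD n p α M f) + 2 ^ M * wLp n p α f * B +
          (C₂ * wLp n p α f + 2 ^ M * B * besB s q (modD n p α M f)) := le_self_add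
      _ = _ := by
        rw [besovNorm_eq]
        ring
  calc _ ≤ besB s q (fun t => C₁ * (Ng * H f t + Nf * H g t)) := by
        refine besB_mono fun t ht => ?_
        obtain ⟨J, hJ⟩ := exists_prodBound_le (n := n) (p := p) (α := α) (M := M) ht
        refine (h₁ f g hf hg Nf Ng hNf hNg hfN hgN t ht.1 J).trans ?_
        gcongr
        · exact hJ f
        · exact hJ g
    _ ≤ C₁ * (Ng * besB s q (H f) + Nf * besB s q (H g)) := by
        rw [besB_const_mul hq hC₁]
        gcongr
        refine (besB_add_le hq ((hHm f hf.meas).const_mul _) ((hHm g hg.meas).const_mul _)).trans ?_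
        rw [besB_const_mul hq hNg, besB_const_mul hq hNf]
    _ ≤ C₁ * (Ng * ((C₂ + 2 ^ M * B) * besovNorm n p α s q M f) +
          Nf * ((C₂ + 2 ^ M * B) * besovNorm n p α s q M g)) := by
        gcongr
        · exact hHB f hf
        · exact hHB g hg
    _ = _ := by ring

end besovProduct

/-- If `s > (n+α)/p`, or `s = (n+α)/p` and `q = 1`, then the weighted Besov space
`B^s_{p,q}(ℝ^n, |·|^α)` is an algebra under pointwise multiplication. -/
theorem besov_algebra
    (n : ℕ) (hn : 1 ≤ n) (p α s : ℝ) (q : ℝ≥0∞) (M : ℕ)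
    (hp : 1 < p) (hq : 1 ≤ q) (hα0 : 0 ≤ α) (hα : α < n * (p - 1)) (hsM : s < (M : ℝ))
    (hs : ((n : ℝ) + α) / p < s ∨ (s = ((n : ℝ) + α) / p ∧ q = 1)) :
    ∃ C : ℝ, 0 < C ∧ ∀ f g : EuclideanSpace ℝ (Fin n) → ℝ,
      MemBesov n p α s q M f → MemBesov n p α s q M g →
        MemBesov n p α s q M (fun x => f x * g x) ∧
        besovNorm n p α s q M (fun x => f x * g x) ≤
          ENNReal.ofReal C * besovNorm n p α s q M f * besovNorm n p α s q M g := by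
  have A : Adm n p α := ⟨hn, hp, hα0, hα⟩
  have hM : 1 ≤ M := by
    have hσ := crit_nonneg A
    have hs0 : 0 ≤ s := hs.elim (fun h => hσ.trans h.le) fun h => hσ.trans h.1.ge
    exact_mod_cast (hs0.trans_lt hsM : (0 : ℝ) < M)
  obtain ⟨C₁, hC₁, h₁⟩ := ae_enorm_le_besovNorm A hM hq hs
  obtain ⟨C₂, hC₂, h₂⟩ := besB_modD_mul_le A hM hq hsM
  set C : ℝ≥0∞ := C₁ + 2 * C₁ * C₂ with hCdef
  have hC : C ≠ ∞ := by finiteness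
  refine ⟨C.toReal + 1, by positivity, fun f g hf hg => ?_⟩
  have memW : ∀ f, MemBesov n p α s q M f → MemW n p α f := fun f hf =>
    ⟨hf.1, ne_top_of_le_ne_top hf.2.ne le_self_add⟩
  have hfW := memW f hf
  have hgW := memW g hg
  set F := besovNorm n p α s q M f with hF
  set G := besovNorm n p α s q M g with hG
  have hFt : F ≠ ∞ := hf.2.ne
  have hGt : G ≠ ∞ := hg.2.ne
  have hprod : besovNorm n p α s q M (fun x => f x * g x) ≤ C * F * G := by
    rw [besovNorm_eq]
    calc _ ≤ C₁ * G * F + C₂ * (C₁ * G * F + C₁ * F * G) := by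
          refine add_le_add ((wLp_mul_le A (by finiteness) (h₁ g hgW)).trans ?_)
            (h₂ f g hfW hgW _ _ (by finiteness) (by finiteness) (h₁ f hfW) (h₁ g hgW))
          gcongr
          exact le_self_add
      _ = _ := by rw [hCdef]; ring
  have hle : C ≤ ENNReal.ofReal (C.toReal + 1) := by
    rw [← ENNReal.ofReal_toReal hC]
    refine ENNReal.ofReal_le_ofReal ?_
    rw [ENNReal.ofReal_toReal hC]
    linarith
  exact ⟨⟨hf.1.mul hg.1, hprod.trans_lt (by finiteness)⟩, hprod.trans (by gcongr)⟩
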